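/- For n ≥ 3, the join-meet ideal I = (y_i y_j − xz : 1 ≤ i < j ≤ n) of the diamond lattice D_{n+2} is a Gorenstein ideal; that is, the quotient ring S/I is Gorenstein. -/

import Mathlib

open MvPolynomial

noncomputable def xP (K : Type*) [Field K] (n : ℕ) : MvPolynomial (Fin (n + 2)) K := X 0
noncomputable def zP (K : Type*) [Field K] (n : ℕ) : MvPolynomial (Fin (n + 2)) K :=
  X (Fin.last (n + 1))
noncomputable def yP (K : Type*) [Field K] (n : ℕ) (i : Fin n) : MvPolynomial (Fin (n + 2)) K :=
  X i.succ.castSucc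

/-- The join-meet ideal `I` of the diamond lattice `D_{n+2}`. -/
noncomputable def diamondIdeal (K : Type*) [Field K] (n : ℕ) :
    Ideal (MvPolynomial (Fin (n + 2)) K) :=
  Ideal.span {f | ∃ i j : Fin n, i < j ∧ f = yP K n i * yP K n j - xP K n * zP K n}

def mdeg {σ : Type*} (m : σ →₀ ℕ) : ℕ := m.sum fun _ e => e

/-- A minimal graded free resolution
`⋯ → F_{i+1} → F_i → ⋯ → F_0 → S/I → 0` of `S/I` over `S = K[x_s : s ∈ σ]`.
`F_i` is free with finite homogeneous basis `B i`, the basis element `b : B i` having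
degree `deg i b`; the differentials are graded and have entries in the graded maximal
ideal (minimality); `ε` is a lift of the augmentation `F_0 → S/I`. -/
structure MinGradedFreeRes (K : Type*) [Field K] (σ : Type*) (I : Ideal (MvPolynomial σ K)) where
  B : ℕ → Type
  finB : ∀ i, Finite (B i)
  deg : ∀ i, B i → ℕ
  d : ∀ i, ((B (i + 1)) →₀ MvPolynomial σ K) →ₗ[MvPolynomial σ K] ((B i) →₀ MvPolynomial σ K)
  ε : ((B 0) →₀ MvPolynomial σ K) →ₗ[MvPolynomial σ K] MvPolynomial σ K
  ε_homog : ∀ b : B 0, (ε (Finsupp.single b 1)).IsHomogeneous (deg 0 b)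
  surj : ∀ s : MvPolynomial σ K, ∃ t, ε t - s ∈ I
  exact0 : LinearMap.range (d 0) = Submodule.comap ε (I : Submodule _ _)
  exact : ∀ i, LinearMap.range (d (i + 1)) = LinearMap.ker (d i)
  homog : ∀ i (b : B (i + 1)) (c : B i),
    ∀ m ∈ ((d i (Finsupp.single b 1)) c).support, mdeg m + deg i c = deg (i + 1) b
  minimal : ∀ i (b : B (i + 1)) (c : B i), coeff 0 ((d i (Finsupp.single b 1)) c) = 0

/-- The graded Betti number `β_{i,j}(S/I)` read off from a minimal graded free resolution:
the number of basis elements of `F_i` of degree `j`. -/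
noncomputable def MinGradedFreeRes.betti {K : Type*} [Field K] {σ : Type*}
    {I : Ideal (MvPolynomial σ K)} (F : MinGradedFreeRes K σ I) (i j : ℕ) : ℕ :=
  Nat.card {b : F.B i // F.deg i b = j}

/-- Regular sequence (elementwise colon characterization). -/
def IsRegSeq {R : Type*} [CommRing R] {m : ℕ} (f : Fin m → R) : Prop :=
  (∀ k : Fin m, ∀ s : R,
      f k * s ∈ Ideal.span (f '' {j | j < k}) → s ∈ Ideal.span (f '' {j | j < k})) ∧
    Ideal.span (Set.range f) ≠ ⊤

/-- `S/I` is Cohen–Macaulay: there is a regular sequence inside the graded maximal ideal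
whose length equals the Krull dimension of `S/I`. -/
def IsCMquot {K : Type*} [Field K] {σ : Type*} (I : Ideal (MvPolynomial σ K)) : Prop :=
  ∃ m : ℕ, ringKrullDim (MvPolynomial σ K ⧸ I) = m ∧
    ∃ f : Fin m → (MvPolynomial σ K ⧸ I),
      (∀ i, f i ∈ Ideal.map (Ideal.Quotient.mk I)
        (Ideal.span (Set.range (X : σ → MvPolynomial σ K)))) ∧
      IsRegSeq f


theorem dia_span {P R : Type*} [CommRing P] [CommRing R] [Algebra P R] (m : ℕ)
    (x z v : R) (y : Fin (m + 3) → R) (T1 T2 b α β δ : P)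
    (hz : z = x - algebraMap P R T1)
    (hy : ∀ i j, i ≠ j → y i * y j = x * z)
    (hs : ∑ i, y i = algebraMap P R T2 + algebraMap P R b * x)
    (hab : α * b + β * ((m + 3 : ℕ) : P) = 1)
    (hd : δ * (((m + 3 : ℕ) : P) ^ 2 - b ^ 2) = 1)
    (hv : v = algebraMap P R α * (x ^ 2 * y 0) + algebraMap P R β * x ^ 3)
    (W : Submodule P R) (h1 : 1 ∈ W) (hx : x ∈ W) (hyW : ∀ i, i ≠ 0 → y i ∈ W)
    (hxx : x * x ∈ W) (hxy : ∀ i, i ≠ 0 → x * y i ∈ W) (hvW : v ∈ W) :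
    (∀ i, y i ∈ W) ∧ (∀ i, x * y i ∈ W) ∧ x ^ 3 ∈ W ∧ x ^ 2 * y 0 ∈ W ∧ 
      (∀ i j, y i * y j ∈ W) ∧ (∀ i, x * (x * y i) ∈ W) ∧ (∀ i j, y i * (x * y j) ∈ W) ∧
      x * v ∈ W ∧ (∀ i, y i * v ∈ W) := by
  have hm : ∀ (p : P) {w : R}, w ∈ W → algebraMap P R p * w ∈ W := fun p w hw => by
    rw [← Algebra.smul_def]; exact W.smul_mem p hw
  have hab' := congrArg (algebraMap P R) hab
  have hd' := congrArg (algebraMap P R) hd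
  simp only [map_add, map_mul, map_sub, map_pow, map_one, map_natCast] at hab' hd'
  set t1 := algebraMap P R T1 with ht1
  set t2 := algebraMap P R T2 with ht2
  set B := algebraMap P R b with hB
  set A := algebraMap P R α with hA
  set G := algebraMap P R β with hG
  set D := algebraMap P R δ with hD
  set N : R := ((m + 3 : ℕ) : R) with hN
  have hNmem : ∀ {w : R}, w ∈ W → N * w ∈ W := fun {w} hw => by
    rw [hN, ← nsmul_eq_mul]; exact W.nsmul_mem hw _
  have hs0 : y 0 = t2 + B * x - ∑ i ∈ Finset.univ.erase 0, y i := by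
    rw [← hs, ← Finset.add_sum_erase _ _ (Finset.mem_univ (0 : Fin (m + 3)))]; ring
  have ht2W : t2 ∈ W := by simpa using hm T2 h1
  have hyA : ∀ i, y i ∈ W := by
    intro i
    by_cases hi : i = 0
    · subst hi; rw [hs0]
      exact W.sub_mem (W.add_mem ht2W (hm b hx))
        (W.sum_mem fun i hi => hyW i (Finset.ne_of_mem_erase hi))
    · exact hyW i hi
  have hxyA : ∀ i, x * y i ∈ W := by
    intro i
    by_cases hi : i = 0
    · subst hi; rw [hs0, mul_sub, mul_add, Finset.mul_sum]
      refine W.sub_mem (W.add_mem ?_ ?_)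
        (W.sum_mem fun i hi => hxy i (Finset.ne_of_mem_erase hi))
      · rw [mul_comm]; exact hm T2 hx
      · rw [mul_left_comm]; exact hm b hxx
    · exact hxy i hi
  have hQ : ∀ i j, x * z * y i = x * z * y j := by
    intro i j
    by_cases hij : i = j
    · rw [hij]
    obtain ⟨k, hk⟩ : ∃ k : Fin (m + 3), k ∉ ({i, j} : Finset (Fin (m + 3))) := by
      by_contra hcon
      push Not at hcon
      have : (Finset.univ : Finset (Fin (m+3))) ⊆ {i, j} := fun k _ => hcon k
      have h2 := Finset.card_le_card this
      have h3 := Finset.card_le_two (a := i) (b := j)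
      simp at h2
      omega
    simp only [Finset.mem_insert, Finset.mem_singleton, not_or] at hk
    have e1 := hy i k (Ne.symm hk.1)
    have e2 := hy k j hk.2
    linear_combination (-y i) * e2 + y j * e1
  have hQQ : ∀ i j, x * z * y i * y j = x * z * (x * z) := by
    intro i j
    obtain ⟨k, hk⟩ : ∃ k : Fin (m + 3), k ≠ j := exists_ne j
    rw [hQ i k, mul_assoc, hy k j hk]
  have hsq : ∀ i, y i * y i = t2 * y i + B * (x * y i) - (N - 1) * (x * z) := by
    intro i
    have e : y i * ∑ j, y j = y i * y i + (N - 1) * (x * z) := by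
      rw [← Finset.add_sum_erase _ _ (Finset.mem_univ i), mul_add, Finset.mul_sum,
        Finset.sum_congr rfl (fun j hj => hy i j (Ne.symm (Finset.ne_of_mem_erase hj)))]
      simp [hN]
      ring
    rw [hs] at e
    linear_combination -e
  have hQs : N * (x * z * y 0) = (t2 + B * x) * (x * z) := by
    rw [← hs, Finset.sum_mul, Finset.sum_congr rfl (fun j _ => (by
      rw [mul_comm, hQ j 0] : y j * (x * z) = x * z * y 0))]
    simp [hN]
  have hrel : N * (x ^ 2 * y 0) - B * x ^ 3 =
      N * (t1 * (x * y 0)) + t2 * (x * x) - t2 * (t1 * x) - B * (t1 * (x * x)) := by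
    rw [hz] at hQs
    linear_combination hQs
  have hrelW : N * (x ^ 2 * y 0) - B * x ^ 3 ∈ W := by
    rw [hrel]
    exact W.sub_mem (W.sub_mem (W.add_mem (hNmem (hm _ (hxyA 0))) (hm _ hxx)) (hm _ (hm _ hx)))
      (hm _ (hm _ hxx))
  have hx3 : x ^ 3 ∈ W := by
    have : x ^ 3 = N * v - A * (N * (x ^ 2 * y 0) - B * x ^ 3) := by
      rw [hv]; linear_combination (-x ^ 3) * hab'
    rw [this]; exact W.sub_mem (hNmem hvW) (hm _ hrelW)
  have hw : x ^ 2 * y 0 ∈ W := by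
    have : x ^ 2 * y 0 = B * v + G * (N * (x ^ 2 * y 0) - B * x ^ 3) := by
      rw [hv]; linear_combination (-x ^ 2 * y 0) * hab'
    rw [this]; exact W.add_mem (hm _ hvW) (hm _ hrelW)
  have hxzW : x * z ∈ W := by
    have : x * z = x * x - t1 * x := by rw [hz]; ring
    rw [this]; exact W.sub_mem hxx (hm _ hx)
  have hxxzW : x * (x * z) ∈ W := by
    have : x * (x * z) = x ^ 3 - t1 * (x * x) := by rw [hz]; ring
    rw [this]; exact W.sub_mem hx3 (hm _ hxx)
  have hN1 : ∀ {w : R}, w ∈ W → (N - 1) * w ∈ W := fun {w} hw => by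
    rw [sub_mul, one_mul]; exact W.sub_mem (hNmem hw) hw
  have hyy : ∀ i j, y i * y j ∈ W := by
    intro i j
    by_cases hij : i = j
    · subst hij; rw [hsq]
      exact W.sub_mem (W.add_mem (hm _ (hyA i)) (hm _ (hxyA i))) (hN1 hxzW)
    · rw [hy i j hij]; exact hxzW
  have hxxy : ∀ i, x * (x * y i) ∈ W := by
    intro i
    have : x * (x * y i) = x ^ 2 * y 0 + t1 * (x * y i) - t1 * (x * y 0) := by
      have := hQ i 0
      rw [hz] at this
      linear_combination this
    rw [this]; exact W.sub_mem (W.add_mem hw (hm _ (hxyA i))) (hm _ (hxyA 0))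
  have hyxy : ∀ i j, y i * (x * y j) ∈ W := by
    intro i j
    by_cases hij : i = j
    · subst hij
      have : y i * (x * y i) = t2 * (x * y i) + B * (x * (x * y i)) - (N - 1) * (x * (x * z)) := by
        linear_combination x * hsq i
      rw [this]
      exact W.sub_mem (W.add_mem (hm _ (hxyA i)) (hm _ (hxxy i))) (hN1 hxxzW)
    · have : y i * (x * y j) = x * (x * z) := by linear_combination x * hy i j hij
      rw [this]; exact hxxzW
  have hQyW : x * z * y 0 ∈ W := by
    have : x * z * y 0 = x ^ 2 * y 0 - t1 * (x * y 0) := by rw [hz]; ring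
    rw [this]; exact W.sub_mem hw (hm _ (hxyA 0))
  have hQ2 : x * z * (x * z) = x ^ 2 * (x * z) - t1 * (x * (x * z)) := by
    nth_rewrite 2 [hz]; ring
  have hbx : B * (x * (x * z * y 0)) = N * (x * z * (x * z)) - t2 * (x * z * y 0) := by
    linear_combination (-y 0) * hQs + N * hQQ 0 0
  have hnx : N * (x * (x * z * y 0)) = t2 * (x * (x * z)) + B * (x ^ 2 * (x * z)) := by
    linear_combination x * hQs
  have hx2Q : x ^ 2 * (x * z) ∈ W := by
    have : x ^ 2 * (x * z) = D * (B * (t2 * (x * (x * z))) + N * (N * (t1 * (x * (x * z))))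
        + N * (t2 * (x * z * y 0))) := by
      linear_combination (-x ^ 2 * (x * z)) * hd' - D * N * hbx + D * B * hnx - D * N * N * hQ2
    rw [this]
    exact hm _ (W.add_mem (W.add_mem (hm _ (hm _ hxxzW)) (hNmem (hNmem (hm _ hxxzW))))
      (hNmem (hm _ hQyW)))
  have hQ2W : x * z * (x * z) ∈ W := by
    rw [hQ2]; exact W.sub_mem hx2Q (hm _ hxxzW)
  have hxQy : x * (x * z * y 0) ∈ W := by
    have : x * (x * z * y 0) = A * (N * (x * z * (x * z)) - t2 * (x * z * y 0)) +
        G * (t2 * (x * (x * z)) + B * (x ^ 2 * (x * z))) := by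
      linear_combination (-x * (x * z * y 0)) * hab' + A * hbx + G * hnx
    rw [this]
    exact W.add_mem (hm _ (W.sub_mem (hNmem hQ2W) (hm _ hQyW)))
      (hm _ (W.add_mem (hm _ hxxzW) (hm _ hx2Q)))
  have hxw : x * (x ^ 2 * y 0) ∈ W := by
    have : x * (x ^ 2 * y 0) = x * (x * z * y 0) + t1 * (x * (x * y 0)) := by rw [hz]; ring
    rw [this]; exact W.add_mem hxQy (hm _ (hxxy 0))
  have hx4 : x * x ^ 3 ∈ W := by
    have : x * x ^ 3 = x ^ 2 * (x * z) + t1 * x ^ 3 := by rw [hz]; ring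
    rw [this]; exact W.add_mem hx2Q (hm _ hx3)
  have hyx3 : ∀ i, y i * x ^ 3 ∈ W := by
    intro i
    have : y i * x ^ 3 = x * (x ^ 2 * y 0) + t1 * (x * (x * y i)) - t1 * (x * (x * y 0)) := by
      have := hQ i 0
      rw [hz] at this
      linear_combination x * this
    rw [this]; exact W.sub_mem (W.add_mem hxw (hm _ (hxxy i))) (hm _ (hxxy 0))
  have hyw : ∀ i, y i * (x ^ 2 * y 0) ∈ W := by
    intro i
    have : y i * (x ^ 2 * y 0) = x * z * (x * z) + t1 * (y i * (x * y 0)) := by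
      have := hQQ 0 i
      rw [← this, hz]; ring
    rw [this]; exact W.add_mem hQ2W (hm _ (hyxy i 0))
  refine ⟨hyA, hxyA, hx3, hw, hyy, hxxy, hyxy, ?_, fun i => ?_⟩
  · have : x * v = A * (x * (x ^ 2 * y 0)) + G * (x * x ^ 3) := by rw [hv]; ring
    rw [this]; exact W.add_mem (hm _ hxw) (hm _ hx4)
  · have : y i * v = A * (y i * (x ^ 2 * y 0)) + G * (y i * x ^ 3) := by rw [hv]; ring
    rw [this]; exact W.add_mem (hm _ (hyw i)) (hm _ (hyx3 i))


theorem exists_quad.{u} (P : Type u) [CommRing P] (c d : P) :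
    ∃ (Q : Type u) (_ : CommRing Q) (_ : Algebra P Q) (u : Q),
      u * u = algebraMap P Q c + algebraMap P Q d * u ∧
      ∀ a e : P, algebraMap P Q a + algebraMap P Q e * u = 0 → a = 0 ∧ e = 0 := by
  refine ⟨QuadraticAlgebra P c d, inferInstance, inferInstance, ⟨0, 1⟩, ?_, ?_⟩
  · ext <;> simp [QuadraticAlgebra.algebraMap_eq]
  · intro a e h
    have h1 := congrArg QuadraticAlgebra.re h
    have h2 := congrArg QuadraticAlgebra.im h
    simp [QuadraticAlgebra.algebraMap_eq] at h1 h2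
    exact ⟨h1, h2⟩

section Dia

variable (K : Type*) [Field K] (m : ℕ) (b α β : K)

abbrev DS := MvPolynomial (Fin (m + 3 + 2)) K
abbrev DP := MvPolynomial (Fin 2) K
abbrev DR := DS K m ⧸ diamondIdeal K (m + 3)

noncomputable def th1 : DS K m := xP K (m + 3) - zP K (m + 3)
noncomputable def th2 : DS K m := (∑ i, yP K (m + 3) i) - C b * xP K (m + 3)

noncomputable def vS : DS K m :=
  C α * (xP K (m + 3) ^ 2 * yP K (m + 3) 0) + C β * xP K (m + 3) ^ 3

abbrev DI (m : ℕ) := Unit ⊕ Fin (m + 3) ⊕ Fin (m + 3) ⊕ Unit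

noncomputable def lS (i : Fin (m + 3)) : DS K m :=
  if i = 0 then xP K (m + 3) else yP K (m + 3) i

noncomputable def eS : DI m → DS K m :=
  Sum.elim (fun _ => 1) (Sum.elim (lS K m) (Sum.elim (fun i => xP K (m + 3) * lS K m i)
    (fun _ => vS K m α β)))

noncomputable def thP : DP K →ₐ[K] DR K m :=
  aeval ![Ideal.Quotient.mk _ (th1 K m), Ideal.Quotient.mk _ (th2 K m b)]

theorem dia_rel (i j : Fin (m + 3)) (h : i ≠ j) :
    yP K (m + 3) i * yP K (m + 3) j - xP K (m + 3) * zP K (m + 3) ∈ diamondIdeal K (m + 3) := by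
  rcases lt_or_gt_of_ne h with h | h
  · exact Ideal.subset_span ⟨i, j, h, rfl⟩
  · rw [mul_comm (yP _ _ i)]
    exact Ideal.subset_span ⟨j, i, h, rfl⟩

/-- evaluation hom of `S` determined by values of x, y, z. -/
noncomputable def evS {Q : Type*} [CommRing Q] [Algebra K Q] (x z : Q) (y : Fin (m + 3) → Q) :
    DS K m →ₐ[K] Q :=
  aeval (Fin.snoc (Fin.cons x y : Fin (m + 3 + 1) → Q) z : Fin (m + 3 + 2) → Q)

variable {K m} in
theorem evS_x {Q : Type*} [CommRing Q] [Algebra K Q] (x z : Q) (y : Fin (m + 3) → Q) :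
    evS K m x z y (xP K (m + 3)) = x := by
  rw [evS, xP, aeval_X, ← Fin.castSucc_zero, Fin.snoc_castSucc, Fin.cons_zero]

variable {K m} in
theorem evS_z {Q : Type*} [CommRing Q] [Algebra K Q] (x z : Q) (y : Fin (m + 3) → Q) :
    evS K m x z y (zP K (m + 3)) = z := by
  rw [evS, zP, aeval_X, Fin.snoc_last]

variable {K m} in
theorem evS_y {Q : Type*} [CommRing Q] [Algebra K Q] (x z : Q) (y : Fin (m + 3) → Q)
    (i : Fin (m + 3)) : evS K m x z y (yP K (m + 3) i) = y i := by
  rw [evS, yP, aeval_X, Fin.snoc_castSucc, Fin.cons_succ]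

/-- key: a relation maps to any target. -/
theorem dia_eval {Q : Type*} [CommRing Q] [Algebra K Q] (x z : Q) (y : Fin (m + 3) → Q)
    (hy : ∀ i j, i ≠ j → y i * y j = x * z) (p : DI m → DP K)
    (h : ∑ i, thP K m b (p i) * Ideal.Quotient.mk _ (eS K m α β i) = 0) :
    let g := aeval (R := K) ![x - z, ∑ i, y i - algebraMap K Q b * x]
    let l : Fin (m + 3) → Q := fun i => if i = 0 then x else y i
    g (p (.inl ())) + ∑ i, g (p (.inr (.inl i))) * l i + ∑ i, g (p (.inr (.inr (.inl i)))) * (x * l i)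
      + g (p (.inr (.inr (.inr ())))) *
        (algebraMap K Q α * (x ^ 2 * y 0) + algebraMap K Q β * x ^ 3) = 0 := by
  intro g l
  have hI : ∀ a ∈ diamondIdeal K (m + 3), evS K m x z y a = 0 := by
    have : diamondIdeal K (m + 3) ≤ RingHom.ker (evS K m x z y) := by
      rw [diamondIdeal, Ideal.span_le]
      rintro _ ⟨i, j, hij, rfl⟩
      simp [evS_x, evS_y, evS_z, hy i j hij.ne]
    exact fun a ha => this ha
  let φ : DR K m →ₐ[K] Q := Ideal.Quotient.liftₐ _ (evS K m x z y) hI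
  have hφ : ∀ s, φ (Ideal.Quotient.mk _ s) = evS K m x z y s := fun s => rfl
  have hg : ∀ q, φ (thP K m b q) = g q := by
    intro q
    have : φ.comp (thP K m b) = g := by
      apply MvPolynomial.algHom_ext
      intro i
      fin_cases i
      · simp [thP, hφ, g, th1, evS_x, evS_z]
      · simp [thP, hφ, g, th2, evS_x, evS_y]
    rw [← this]; rfl
  have hl : ∀ i, evS K m x z y (lS K m i) = l i := by
    intro i; simp only [lS, l]; split_ifs <;> simp [evS_x, evS_y]
  have := congrArg φ h
  simp only [map_sum, map_mul, hg, hφ, map_zero] at this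
  simpa [Fintype.sum_sum_type, eS, hl, evS_x, vS, evS_y, ← add_assoc] using this

variable {b α β} (δ : K) 

theorem dia_indep (hab : α * b + β * ((m + 3 : ℕ) : K) = 1)
    (hd : δ * (((m + 3 : ℕ) : K) ^ 2 - b ^ 2) = 1) (p : DI m → DP K)
    (h : ∑ i, thP K m b (p i) * Ideal.Quotient.mk _ (eS K m α β i) = 0) : p = 0 := by
  set T1 : DP K := X 0 with hT1
  set T2 : DP K := X 1 with hT2
  have hid : ∀ q : DP K, aeval ![T1, T2] q = q := by
    intro q
    have : aeval ![T1, T2] = AlgHom.id K (DP K) := by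
      apply MvPolynomial.algHom_ext
      intro i; fin_cases i <;> simp [hT1, hT2]
    rw [this]; rfl
  have hT1' : T1 ≠ 0 := X_ne_zero _
  have hT2' : T2 ≠ 0 := X_ne_zero _
  obtain ⟨p0, hp0⟩ : ∃ p0, p (.inl ()) = p0 := ⟨_, rfl⟩
  obtain ⟨pl, hpl⟩ : ∃ pl : Fin (m + 3) → DP K, ∀ i, p (.inr (.inl i)) = pl i := ⟨_, fun _ => rfl⟩
  obtain ⟨q, hq⟩ : ∃ q : Fin (m + 3) → DP K, ∀ i, p (.inr (.inr (.inl i))) = q i :=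
    ⟨_, fun _ => rfl⟩
  obtain ⟨r, hr⟩ : ∃ r, p (.inr (.inr (.inr ()))) = r := ⟨_, rfl⟩
  have hz : ∀ k, p0 + (if k = 0 then 0 else pl k * T2) = 0 := by
    intro k
    have := dia_eval K m b α β (Q := DP K) 0 (-T1) (fun i => if i = k then T2 else 0)
      (by intro i j hij; by_cases hi : i = k <;> by_cases hj : j = k <;> simp_all) p h
    simp only [hp0, hpl, hq, hr, sub_neg_eq_add, zero_add, Finset.sum_ite_eq', Finset.mem_univ,
      if_true, mul_zero, sub_zero, hid, zero_mul, Finset.sum_const_zero, add_zero, ne_eq,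
      OfNat.ofNat_ne_zero, not_false_eq_true, zero_pow] at this
    refine Eq.trans ?_ this
    congr 1
    by_cases hk : k = 0
    · subst hk
      rw [if_pos rfl]
      symm
      apply Finset.sum_eq_zero
      intro i _
      by_cases hi : i = 0 <;> simp [hi]
    · rw [Finset.sum_eq_single k]
      · simp [hk]
      · intro i _ hi; simp [hi]
      · simp
  have e0 : p0 = 0 := by simpa using hz 0
  have epl : ∀ k, k ≠ 0 → pl k = 0 := by
    intro k hk
    have := hz k
    rw [e0, if_neg hk, zero_add] at this
    exact (mul_eq_zero.mp this).resolve_right hT2'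
  have hx : ∀ k, pl 0 * T1 + q 0 * (T1 * T1) +
      (if k = 0 then 0 else q k * (T1 * (T2 + C b * T1))) +
      r * ((if k = 0 then C α * (T1 ^ 2 * (T2 + C b * T1)) else 0) + C β * T1 ^ 3) = 0 := by
    intro k
    have := dia_eval K m b α β (Q := DP K) T1 0 (fun i => if i = k then T2 + C b * T1 else 0)
      (by intro i j hij; by_cases hi : i = k <;> by_cases hj : j = k <;> simp_all) p h
    simp only [hp0, hpl, hq, hr, Finset.sum_ite_eq', Finset.mem_univ, algebraMap_eq, 
      if_true, sub_zero, add_sub_cancel_right, hid, e0, zero_add] at this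
    have s1 : (∑ i, pl i * if i = 0 then T1 else if i = k then T2 + C b * T1 else 0) = pl 0 * T1 := by
      rw [Finset.sum_eq_single 0]
      · simp
      · intro i _ hi; simp [epl i hi]
      · simp
    have s2 : (∑ i, q i * (T1 * if i = 0 then T1 else if i = k then T2 + C b * T1 else 0)) =
        q 0 * (T1 * T1) + (if k = 0 then 0 else q k * (T1 * (T2 + C b * T1))) := by
      rw [← Finset.add_sum_erase _ _ (Finset.mem_univ (0 : Fin (m + 3)))]
      congr 1
      by_cases hk : k = 0
      · subst hk
        rw [Finset.sum_eq_zero]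
        · simp
        · intro i hi; simp [Finset.ne_of_mem_erase hi]
      · rw [Finset.sum_eq_single k]
        · simp [hk]
        · intro i hi hik; simp [Finset.ne_of_mem_erase hi, hik]
        · simp [hk]
    rw [s1, s2] at this
    by_cases hk : k = 0
    · subst hk; simpa using this
    · simpa [hk, Ne.symm hk, add_assoc] using this
  have hx0 : pl 0 + q 0 * T1 + r * (C α * (T1 * (T2 + C b * T1)) + C β * T1 ^ 2) = 0 := by
    have := hx 0
    simp only [if_true] at this
    apply mul_left_cancel₀ hT1'
    linear_combination this
  have hT3 : T2 + C b * T1 ≠ 0 := by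
    intro h0
    have := congrArg (MvPolynomial.eval ![0, 1]) h0
    simp [hT1, hT2] at this
  have eq : ∀ k, k ≠ 0 → q k = r * C α * T1 := by
    intro k hk
    have e1 := hx k
    simp only [if_neg hk] at e1
    apply mul_left_cancel₀ hT3
    apply mul_left_cancel₀ hT1'
    linear_combination e1 - T1 * hx0
  set N : K := ((m + 3 : ℕ) : K) with hN
  have hab' : (C α * C b + C β * C N : DP K) = 1 := by
    simp only [← C_mul, ← C_add, hab, C_1]
  have hd' : (C δ * (C N ^ 2 - C b ^ 2) : DP K) = 1 := by
    simp only [← C_mul, ← C_sub, ← C_pow, hd, C_1]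
  obtain ⟨Q, _, _, u, hu, hind⟩ := exists_quad (DP K)
    (C δ * ((C β ^ 2 - C α ^ 2) * T2 ^ 2 - C α * T1 * T2))
    (C δ * (2 * (C b * C β + C N * C α) * T2 + C N * T1))
  let _ : Algebra K Q := ((algebraMap (DP K) Q).comp C).toAlgebra
  have hKQ : ∀ k : K, algebraMap K Q k = algebraMap (DP K) Q (C k) := fun _ => rfl
  let ι := algebraMap (DP K) Q
  have hι : algebraMap (DP K) Q = ι := rfl
  rw [hι] at hu hKQ hind
  have hab2 := congrArg ι hab'
  have hd2 := congrArg ι hd'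
  have hx2 := congrArg ι hx0
  simp only [map_add, map_mul, map_sub, map_pow, map_one, map_ofNat, map_zero] at hab2 hd2 hu hx2
  obtain ⟨x, hxd⟩ : ∃ x, x = ι (C N) * u - ι (C α) * ι T2 := ⟨_, rfl⟩
  obtain ⟨y, hyd⟩ : ∃ y, y = ι (C b) * u + ι (C β) * ι T2 := ⟨_, rfl⟩
  obtain ⟨z, hzd⟩ : ∃ z, z = x - ι T1 := ⟨_, rfl⟩
  have hQ : y * y = x * z := by
    rw [hzd, hxd, hyd]
    linear_combination (ι (C b) ^ 2 - ι (C N) ^ 2) * hu - 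
      ((ι (C β) ^ 2 - ι (C α) ^ 2) * ι T2 ^ 2 - ι (C α) * ι T1 * ι T2 + 
      (2 * (ι (C b) * ι (C β) + ι (C N) * ι (C α)) * ι T2 + ι (C N) * ι T1) * u) * hd2
  have hE1 : ι T1 = x - z := by rw [hzd]; ring
  have hE2 : ι T2 = ι (C N) * y - ι (C b) * x := by
    rw [hyd, hxd]; linear_combination (-ι T2) * hab2
  have hE3 : u = ι (C β) * x + ι (C α) * y := by
    rw [hyd, hxd]; linear_combination (-u) * hab2
  have hNN : (((m + 3 : ℕ)) : Q) = ι (C N) := by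
    rw [hN, map_natCast, map_natCast]
  have hg : ∀ w : DP K, aeval (R := K) ![x - z, ∑ _i : Fin (m + 3), y - algebraMap K Q b * x] w
      = ι w := by
    intro w
    rw [aeval_def, eval₂_eq_eval_map]
    induction w using MvPolynomial.induction_on with
    | C a => simp [hKQ]
    | add p q hp hq => simp only [map_add, hp, hq]
    | mul_X p i hp =>
      simp only [map_mul, hp]
      congr 1
      fin_cases i
      · simpa using hE1.symm
      · simp only [Finset.sum_const, Finset.card_univ, Fintype.card_fin, nsmul_eq_mul, hNN, hKQ]
        simpa using hE2.symm
  have hfin := dia_eval K m b α β (Q := Q) x z (fun _ => y) (fun _ _ _ => hQ) p h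
  simp only [hp0, hpl, hq, hr, hg, e0, map_zero, zero_add] at hfin
  have s1 : (∑ i, ι (pl i) * if i = 0 then x else y) = ι (pl 0) * x := by
    rw [Finset.sum_eq_single 0]
    · simp
    · intro i _ hi; simp [epl i hi]
    · simp
  have s2 : (∑ i, ι (q i) * (x * if i = 0 then x else y)) =
      ι (q 0) * (x * x) + (ι (C N) - 1) * (ι r * ι (C α) * ι T1 * (x * y)) := by
    rw [← Finset.add_sum_erase _ _ (Finset.mem_univ (0 : Fin (m + 3)))]
    congr 1
    rw [Finset.sum_congr rfl (g := fun _ => ι r * ι (C α) * ι T1 * (x * y))]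
    · rw [Finset.sum_const, nsmul_eq_mul, ← hNN]
      simp
      ring
    · intro i hi
      have := Finset.ne_of_mem_erase hi
      simp [this, eq i this]
  rw [s1, s2, hKQ, hKQ] at hfin
  have hE : y * y * (ι (q 0) + ι r * (ι (C β) * (2 * x - z) +
      ι (C α) * (y + ι (C b) * (x - z)))) = 0 := by
    rw [hQ]
    rw [hE1] at hx2 hfin
    rw [hE2] at hx2
    linear_combination hfin - x * hx2
  obtain ⟨yb, hyb⟩ : ∃ yb, yb = ι (C β) * ι T2 + ι (C b) * 
    (ι (C δ) * (2 * (ι (C b) * ι (C β) + ι (C N) * ι (C α)) * ι T2 + ι (C N) * ι T1) - u) := ⟨_, rfl⟩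
  have hnorm : y * yb = ι (C δ * T2 * (T2 + C b * T1)) := by
    simp only [map_mul, map_add]
    have hab3 : (ι (C α) * ι (C b) + ι (C β) * ι (C N)) ^ 2 = 1 := by rw [hab2]; ring
    rw [hyb, hyd]
    linear_combination (-ι (C b) ^ 2) * hu + ι (C δ) * ι T2 ^ 2 * hab3 - ι (C β) ^ 2 * ι T2 ^ 2 * hd2
      + ι (C δ) * ι (C b) * ι T1 * ι T2 * hab2
  have hfin2 : ι ((C δ * T2 * (T2 + C b * T1)) ^ 2 * (q 0 + r * (C β + C α * C b) * T1)) +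
      ι ((C δ * T2 * (T2 + C b * T1)) ^ 2 * r) * u = 0 := by
    simp only [map_mul ι (_ ^ 2), map_pow, ← hnorm, map_add ι (q 0), map_mul ι (r * _), map_mul ι r,
      map_add ι (C β), map_mul ι (C α)]
    rw [hE1, hE3]
    linear_combination yb ^ 2 * hE
  obtain ⟨f1, f2⟩ := hind _ _ hfin2
  have hδ : (C δ : DP K) ≠ 0 := fun h0 => by simp [h0] at hd'
  have hne : (C δ * T2 * (T2 + C b * T1)) ^ 2 ≠ 0 :=
    pow_ne_zero _ (mul_ne_zero (mul_ne_zero hδ hT2') hT3)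
  have er : r = 0 := (mul_eq_zero.mp f2).resolve_left hne
  have eq0 : q 0 = 0 := by
    have := (mul_eq_zero.mp f1).resolve_left hne
    simpa [er] using this
  have epl0 : pl 0 = 0 := by simpa [er, eq0] using hx0
  funext i
  rcases i with i | i | i | i
  · rw [hp0, e0]; rfl
  · rw [hpl]
    by_cases hi : i = 0
    · rw [hi, epl0]; rfl
    · rw [epl i hi]; rfl
  · rw [hq]
    by_cases hi : i = 0
    · rw [hi, eq0]; rfl
    · rw [eq i hi, er]; simp
  · rw [hr, er]; rfl

end Dia


theorem dia_table {R : Type*} [CommRing R] (m : ℕ)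
    (x v : R) (y : Fin (m + 3) → R) (B A G D N : R) (hN : N = ((m + 3 : ℕ) : R))
    (hy : ∀ i j, i ≠ j → y i * y j = x * x)
    (hs : ∑ i, y i = B * x)
    (hab' : A * B + G * N = 1)
    (hd' : D * (N ^ 2 - B ^ 2) = 1)
    (hv : v = A * (x ^ 2 * y 0) + G * x ^ 3) :
    x * (x * x) = N * v ∧ (∀ i, x * (x * y i) = B * v) ∧
      (∀ i j, i ≠ j → y i * (x * y j) = N * v) ∧
      (∀ i, y i * (x * y i) = (B ^ 2 - N ^ 2 + N) * v) ∧ x * v = 0 ∧ ∀ i, y i * v = 0 := by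
  have hQ : ∀ i j, x * x * y i = x * x * y j := by
    intro i j
    by_cases hij : i = j
    · rw [hij]
    obtain ⟨k, hk⟩ : ∃ k : Fin (m + 3), k ∉ ({i, j} : Finset (Fin (m + 3))) := by
      by_contra hcon
      push Not at hcon
      have : (Finset.univ : Finset (Fin (m+3))) ⊆ {i, j} := fun k _ => hcon k
      have h2 := Finset.card_le_card this
      have h3 := Finset.card_le_two (a := i) (b := j)
      simp at h2
      omega
    simp only [Finset.mem_insert, Finset.mem_singleton, not_or] at hk
    have e1 := hy i k (Ne.symm hk.1)
    have e2 := hy k j hk.2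
    linear_combination (-y i) * e2 + y j * e1
  have hQQ : ∀ i j, x * x * y i * y j = x * x * (x * x) := by
    intro i j
    obtain ⟨k, hk⟩ : ∃ k : Fin (m + 3), k ≠ j := exists_ne j
    rw [hQ i k, mul_assoc, hy k j hk]
  have hsq : ∀ i, y i * y i = B * (x * y i) - (N - 1) * (x * x) := by
    intro i
    have e : y i * ∑ j, y j = y i * y i + (N - 1) * (x * x) := by
      rw [← Finset.add_sum_erase _ _ (Finset.mem_univ i), mul_add, Finset.mul_sum,
        Finset.sum_congr rfl (fun j hj => hy i j (Ne.symm (Finset.ne_of_mem_erase hj)))]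
      simp [hN]
      ring
    rw [hs] at e
    linear_combination -e
  have hQs : N * (x * x * y 0) = (B * x) * (x * x) := by
    rw [← hs, Finset.sum_mul, Finset.sum_congr rfl (fun j _ => (by
      rw [mul_comm, hQ j 0] : y j * (x * x) = x * x * y 0))]
    simp [hN]
  have t1 : x * (x * x) = N * v := by
    rw [hv]; linear_combination (-x ^ 3) * hab' - A * hQs
  have t2 : ∀ i, x * (x * y i) = B * v := by
    intro i
    rw [hv]; linear_combination (-x ^ 2 * y 0) * hab' + G * hQs + hQ i 0
  have t3 : ∀ i j, i ≠ j → y i * (x * y j) = N * v := by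
    intro i j hij
    linear_combination x * hy i j hij + t1
  have t4 : ∀ i, y i * (x * y i) = (B ^ 2 - N ^ 2 + N) * v := by
    intro i
    linear_combination x * hsq i + B * t2 i - (N - 1) * t1
  have u1 : ∀ i, B * (y i * v) = N * (x * v) := by
    intro i
    linear_combination (-y i) * t2 0 + hQQ 0 i + x * t1
  have u2 : ∀ i, N * (y i * v) = B * (x * v) := by
    intro i
    linear_combination (-y i) * t1 + x * t2 i
  refine ⟨t1, t2, t3, t4, ?_, fun i => ?_⟩
  · linear_combination (-(x * v)) * hd' - D * N * u1 0 + D * B * u2 0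
  · linear_combination (-(y i * v)) * hd' + D * N * u2 i - D * B * u1 i

section Dia2

variable (K : Type*) [Field K] (m : ℕ) {b α β : K} (δ : K)

theorem dia_var (s : Fin (m + 3 + 2)) : (X s : DS K m) = xP K (m + 3) ∨
    (X s : DS K m) = zP K (m + 3) ∨ ∃ i, (X s : DS K m) = yP K (m + 3) i := by
  induction s using Fin.lastCases with
  | last => right; left; rfl
  | cast s =>
    induction s using Fin.cases with
    | zero => left; rfl
    | succ i => right; right; exact ⟨i, rfl⟩

theorem dia_spans_aux (hab : α * b + β * ((m + 3 : ℕ) : K) = 1)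
    (hd : δ * (((m + 3 : ℕ) : K) ^ 2 - b ^ 2) = 1) {R : Type*} [CommRing R] [Algebra (DP K) R]
    (q : DS K m →+* R) (hI : ∀ a ∈ diamondIdeal K (m + 3), q a = 0)
    (hC : ∀ k : K, algebraMap (DP K) R (C k) = q (C k))
    (hal0 : algebraMap (DP K) R (X 0) = q (th1 K m))
    (hal1 : algebraMap (DP K) R (X 1) = q (th2 K m b)) (s : DS K m) :
    ∃ p : DI m → DP K, q s = ∑ i, p i • q (eS K m α β i) := by
  let W : Submodule (DP K) R :=
    Submodule.span (DP K) (Set.range fun i => q (eS K m α β i))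
  have hW : ∀ i, q (eS K m α β i) ∈ W := fun i =>
    Submodule.subset_span ⟨i, rfl⟩
  have hab' : C α * C b + C β * ((m + 3 : ℕ) : DP K) = 1 := by
    have := congrArg (C : K →+* DP K) hab
    simpa only [map_add, map_mul, map_natCast, map_one] using this
  have hd' : C δ * (((m + 3 : ℕ) : DP K) ^ 2 - C b ^ 2) = 1 := by
    have := congrArg (C : K →+* DP K) hd
    simpa only [map_sub, map_pow, map_mul, map_natCast, map_one] using this
  have h1 : (1 : R) ∈ W := by simpa [eS] using hW (.inl ())
  have hx : q (xP K (m + 3)) ∈ W := by simpa [eS, lS] using hW (.inr (.inl 0))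
  have hy : ∀ i, i ≠ 0 → q (yP K (m + 3) i) ∈ W := fun i hi => by
    simpa [eS, lS, hi] using hW (.inr (.inl i))
  have hxx : q (xP K (m + 3)) * q (xP K (m + 3)) ∈ W := by
    simpa [eS, lS] using hW (.inr (.inr (.inl 0)))
  have hxy : ∀ i, i ≠ 0 → q (xP K (m + 3)) * q (yP K (m + 3) i) ∈ W := fun i hi => by
    simpa [eS, lS, hi] using hW (.inr (.inr (.inl i)))
  have hv : q (vS K m α β) ∈ W := by simpa [eS] using hW (.inr (.inr (.inr ())))
  have hz : q (zP K (m + 3)) = q (xP K (m + 3)) - algebraMap (DP K) R (X 0) := by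
    simp [hal0, th1]
  have main := dia_span (P := DP K) (R := R) m (q (xP K (m + 3))) (q (zP K (m + 3)))
    (q (vS K m α β)) (fun i => q (yP K (m + 3) i)) (X 0) (X 1) (C b) (C α) (C β) (C δ) hz
    (fun i j hij => by
      rw [← map_mul, ← map_mul]
      rw [← sub_eq_zero, ← map_sub]
      exact hI _ (dia_rel K m i j hij))
    (by simp [hal1, hC, th2]) hab' hd' (by simp [hC, vS]) W h1 hx hy hxx hxy hv
  obtain ⟨m1, m2, m3, m4, m5, m6, m7, m8, m9⟩ := main
  have clx : ∀ w ∈ W, q (xP K (m + 3)) * w ∈ W := by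
    intro w hw
    induction hw using Submodule.span_induction with
    | mem w h =>
      obtain ⟨i, rfl⟩ := h
      rcases i with i | i | i | i
      · simpa [eS] using hx
      · by_cases hi : i = 0
        · simpa [eS, lS, hi] using hxx
        · simpa [eS, lS, hi] using m2 i
      · by_cases hi : i = 0
        · simpa [eS, lS, hi, pow_succ, mul_assoc] using m3
        · simpa [eS, lS, hi] using m6 i
      · simpa [eS] using m8
    | zero => simp
    | add a c _ _ ha hc => rw [mul_add]; exact W.add_mem ha hc
    | smul r a _ ha => rw [mul_smul_comm]; exact W.smul_mem _ ha
  have cly : ∀ j, ∀ w ∈ W, q (yP K (m + 3) j) * w ∈ W := by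
    intro j w hw
    induction hw using Submodule.span_induction with
    | mem w h =>
      obtain ⟨i, rfl⟩ := h
      rcases i with i | i | i | i
      · simpa [eS] using m1 j
      · by_cases hi : i = 0
        · simpa [eS, lS, hi, mul_comm] using m2 j
        · simpa [eS, lS, hi] using m5 j i
      · by_cases hi : i = 0
        · have := m6 j
          simp only [eS, Sum.elim_inr, Sum.elim_inl, lS, hi, if_true, map_mul]
          convert this using 1
          ring
        · simpa [eS, lS, hi] using m7 j i
      · simpa [eS] using m9 j
    | zero => simp
    | add a c _ _ ha hc => rw [mul_add]; exact W.add_mem ha hc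
    | smul r a _ ha => rw [mul_smul_comm]; exact W.smul_mem _ ha
  have clz : ∀ w ∈ W, q (zP K (m + 3)) * w ∈ W := by
    intro w hw
    rw [hz, sub_mul, ← Algebra.smul_def]
    exact W.sub_mem (clx w hw) (W.smul_mem _ hw)
  have all : ∀ s, q s ∈ W := by
    intro s
    induction s using MvPolynomial.induction_on with
    | C a => 
      rw [← hC, ← mul_one (algebraMap _ _ _), ← Algebra.smul_def]
      exact W.smul_mem _ h1
    | add a c ha hc => rw [map_add]; exact W.add_mem ha hc
    | mul_X a i ha =>
      rw [map_mul, mul_comm]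
      rcases dia_var K m i with h | h | ⟨j, h⟩
      · rw [h]; exact clx _ ha
      · rw [h]; exact clz _ ha
      · rw [h]; exact cly _ _ ha
  obtain ⟨p, hp⟩ := (Submodule.mem_span_range_iff_exists_fun _).mp (all s)
  exact ⟨p, hp.symm⟩

theorem thP_C (k : K) : thP K m b (C k) = Ideal.Quotient.mk _ (C k) := by
  rw [thP, ← algebraMap_eq, AlgHom.commutes]; rfl

theorem dia_spans (hab : α * b + β * ((m + 3 : ℕ) : K) = 1)
    (hd : δ * (((m + 3 : ℕ) : K) ^ 2 - b ^ 2) = 1) (s : DS K m) :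
    ∃ p : DI m → DP K, (Ideal.Quotient.mk _ s : DR K m) =
      ∑ i, thP K m b (p i) * Ideal.Quotient.mk _ (eS K m α β i) := by
  let A : Algebra (DP K) (DR K m) := (thP K m b).toRingHom.toAlgebra
  obtain ⟨p, hp⟩ := dia_spans_aux K m δ hab hd (R := DR K m) (Ideal.Quotient.mk _)
    (fun a ha => Ideal.Quotient.eq_zero_iff_mem.mpr ha) (fun k => thP_C K m k)
    (show thP K m b (X 0) = _ by simp [thP]) (show thP K m b (X 1) = _ by simp [thP]) s
  exact ⟨p, hp⟩

end Dia2


section GenFree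
variable {K R ι : Type*} [Field K] [CommRing R] [Fintype ι] (t : MvPolynomial (Fin 2) K →+* R)
  (e : ι → R)

theorem gen_regA (hind : ∀ p : ι → MvPolynomial (Fin 2) K, ∑ i, t (p i) * e i = 0 → p = 0)
    (hsp : ∀ r, ∃ p : ι → MvPolynomial (Fin 2) K, r = ∑ i, t (p i) * e i) (r : R)
    (h : t (X 0) * r = 0) : r = 0 := by
  obtain ⟨p, rfl⟩ := hsp r
  have := hind (fun i => X 0 * p i) (by
    rw [← h, Finset.mul_sum]
    refine Finset.sum_congr rfl fun i _ => ?_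
    rw [map_mul]; ring)
  refine Finset.sum_eq_zero fun i _ => ?_
  have h1 := congrFun this i
  simp only [Pi.zero_apply, mul_eq_zero, X_ne_zero, false_or] at h1
  rw [h1]; simp

theorem gen_regB (hind : ∀ p : ι → MvPolynomial (Fin 2) K, ∑ i, t (p i) * e i = 0 → p = 0)
    (hsp : ∀ r, ∃ p : ι → MvPolynomial (Fin 2) K, r = ∑ i, t (p i) * e i) (r s : R)
    (h : t (X 1) * r = t (X 0) * s) : ∃ u, r = t (X 0) * u := by
  obtain ⟨p, rfl⟩ := hsp r
  obtain ⟨q, rfl⟩ := hsp s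
  have := hind (fun i => X 1 * p i - X 0 * q i) (by
    rw [← sub_eq_zero, Finset.mul_sum, Finset.mul_sum, ← Finset.sum_sub_distrib] at h
    rw [← h]
    refine Finset.sum_congr rfl fun i _ => ?_
    rw [map_sub, map_mul, map_mul]; ring)
  have hdv : ∀ i, (X 0 : MvPolynomial (Fin 2) K) ∣ p i := by
    intro i
    have h1 := congrFun this i
    simp only [Pi.zero_apply, sub_eq_zero] at h1
    have h2 : (X 0 : MvPolynomial (Fin 2) K) ∣ X 1 * p i := ⟨_, h1⟩
    rcases (X_prime (R := K) (i := (0 : Fin 2))).dvd_or_dvd h2 with h3 | h3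
    · rw [X_dvd_X] at h3
      rcases h3 with h3
      simp at h3
    · exact h3
  choose u hu using hdv
  refine ⟨∑ i, t (u i) * e i, ?_⟩
  rw [Finset.mul_sum]
  refine Finset.sum_congr rfl fun i _ => ?_
  rw [hu i, map_mul]; ring

theorem gen_const (p : MvPolynomial (Fin 2) K) : ∃ a b, p = C (constantCoeff p) + X 0 * a + X 1 * b := by
  induction p using MvPolynomial.induction_on with
  | C a => exact ⟨0, 0, by simp⟩
  | add p q hp hq =>
    obtain ⟨a, b, h⟩ := hp
    obtain ⟨a', b', h'⟩ := hq
    refine ⟨a + a', b + b', ?_⟩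
    rw [map_add, map_add]
    linear_combination h + h'
  | mul_X p i _ =>
    fin_cases i
    · exact ⟨p, 0, by simp; ring⟩
    · exact ⟨0, p, by simp; ring⟩

theorem gen_indA (hind : ∀ p : ι → MvPolynomial (Fin 2) K, ∑ i, t (p i) * e i = 0 → p = 0)
    (hsp : ∀ r, ∃ p : ι → MvPolynomial (Fin 2) K, r = ∑ i, t (p i) * e i) (k : ι → K) (r s : R)
    (h : ∑ i, t (C (k i)) * e i = t (X 0) * r + t (X 1) * s) : k = 0 := by
  obtain ⟨p, rfl⟩ := hsp r
  obtain ⟨q, rfl⟩ := hsp s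
  have := hind (fun i => C (k i) - X 0 * p i - X 1 * q i) (by
    rw [← sub_eq_zero, Finset.mul_sum, Finset.mul_sum, ← Finset.sum_add_distrib,
      ← Finset.sum_sub_distrib] at h
    rw [← h]
    refine Finset.sum_congr rfl fun i _ => ?_
    simp only [map_sub, map_mul]; ring)
  funext i
  have h1 := congrArg constantCoeff (congrFun this i)
  simpa using h1

theorem gen_spA (hsp : ∀ r, ∃ p : ι → MvPolynomial (Fin 2) K, r = ∑ i, t (p i) * e i) (r : R) :
    ∃ (k : ι → K) (u v : R), r = ∑ i, t (C (k i)) * e i + t (X 0) * u + t (X 1) * v := by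
  obtain ⟨p, rfl⟩ := hsp r
  choose a b h using fun i => gen_const (p i)
  refine ⟨fun i => constantCoeff (p i), ∑ i, t (a i) * e i, ∑ i, t (b i) * e i, ?_⟩
  rw [Finset.mul_sum, Finset.mul_sum, ← Finset.sum_add_distrib, ← Finset.sum_add_distrib]
  refine Finset.sum_congr rfl fun i _ => ?_
  conv_lhs => rw [h i]
  simp only [map_add, map_mul]; ring

end GenFree


theorem gen_dim_le {K R ι : Type*} [Field K] [CommRing R] [Fintype ι]
    (t : MvPolynomial (Fin 2) K →+* R) (e : ι → R)
    (hsp : ∀ r, ∃ p : ι → MvPolynomial (Fin 2) K, r = ∑ i, t (p i) * e i) :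
    ringKrullDim R ≤ 2 := by
  classical
  algebraize [t]
  have hfin : Module.Finite (MvPolynomial (Fin 2) K) R := by
    refine ⟨⟨Finset.univ.image e, ?_⟩⟩
    rw [eq_top_iff]
    rintro r -
    obtain ⟨p, rfl⟩ := hsp r
    refine Submodule.sum_mem _ fun i _ => ?_
    exact Submodule.smul_mem _ (p i) (Submodule.subset_span (by simp))
  have hIntegral : Algebra.IsIntegral (MvPolynomial (Fin 2) K) R := inferInstance
  have h2 : ringKrullDim (MvPolynomial (Fin 2) K) = 2 := by
    rw [MvPolynomial.ringKrullDim_of_isNoetherianRing, ringKrullDim_eq_zero_of_field]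
    simp
  rw [← h2]
  refine Order.krullDim_le_of_strictMono
    (fun P : PrimeSpectrum R => PrimeSpectrum.comap (algebraMap (MvPolynomial (Fin 2) K) R) P) ?_
  intro P Q h
  have := Ideal.IsIntegral.comap_lt_comap (R := MvPolynomial (Fin 2) K) (I := P.asIdeal) (J := Q.asIdeal) h
  exact this


section Dia3
variable (K : Type*) [Field K] (m : ℕ) {b α β : K} (δ : K)

theorem thP_X0 : thP K m b (X 0) = Ideal.Quotient.mk _ (th1 K m) := by simp [thP]
theorem thP_X1 : thP K m b (X 1) = Ideal.Quotient.mk _ (th2 K m b) := by simp [thP]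

theorem dia_dim_ge : (2 : WithBot ℕ∞) ≤ ringKrullDim (DR K m) := by
  have h2 : ringKrullDim (DP K) = 2 := by
    rw [MvPolynomial.ringKrullDim_of_isNoetherianRing, ringKrullDim_eq_zero_of_field]
    simp
  rw [← h2]
  let g : DS K m →ₐ[K] DP K := evS K m (X 0) 0 (fun i => if i = 0 then X 1 else 0)
  have hg : ∀ a ∈ diamondIdeal K (m + 3), g a = 0 := by
    have : diamondIdeal K (m + 3) ≤ RingHom.ker g := by
      rw [diamondIdeal, Ideal.span_le]
      rintro _ ⟨i, j, hij, rfl⟩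
      simp only [SetLike.mem_coe, RingHom.mem_ker, map_sub, map_mul, g, evS_x, evS_y, evS_z]
      have : j ≠ 0 := fun h => by rw [h] at hij; exact absurd hij (by simp)
      simp [this]
    exact fun a ha => this ha
  refine ringKrullDim_le_of_surjective (Ideal.Quotient.lift _ g.toRingHom hg) ?_
  apply Ideal.Quotient.lift_surjective_of_surjective
  intro p
  refine ⟨aeval ![xP K (m + 3), yP K (m + 3) 0] p, ?_⟩
  have : g.comp (aeval ![xP K (m + 3), yP K (m + 3) 0]) = AlgHom.id K (DP K) := by
    apply MvPolynomial.algHom_ext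
    intro i
    fin_cases i
    · simp [g, evS_x]
    · simp [g, evS_y]
  exact DFunLike.congr_fun this p

theorem dia_dim (hab : α * b + β * ((m + 3 : ℕ) : K) = 1)
    (hd : δ * (((m + 3 : ℕ) : K) ^ 2 - b ^ 2) = 1) : ringKrullDim (DR K m) = 2 := by
  refine le_antisymm ?_ (dia_dim_ge K m)
  refine gen_dim_le (thP K m b).toRingHom (fun i => Ideal.Quotient.mk _ (eS K m α β i)) ?_
  intro r
  obtain ⟨s, rfl⟩ := Ideal.Quotient.mk_surjective r
  exact dia_spans K m δ hab hd s

theorem dia_hsp (hab : α * b + β * ((m + 3 : ℕ) : K) = 1)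
    (hd : δ * (((m + 3 : ℕ) : K) ^ 2 - b ^ 2) = 1) (r : DR K m) :
    ∃ p : DI m → DP K, r = ∑ i, (thP K m b).toRingHom (p i) *
      Ideal.Quotient.mk (diamondIdeal K (m + 3)) (eS K m α β i) := by
  obtain ⟨s, rfl⟩ := Ideal.Quotient.mk_surjective r
  exact dia_spans K m δ hab hd s

theorem dia_hind (hab : α * b + β * ((m + 3 : ℕ) : K) = 1)
    (hd : δ * (((m + 3 : ℕ) : K) ^ 2 - b ^ 2) = 1) (p : DI m → DP K)
    (h : ∑ i, (thP K m b).toRingHom (p i) *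
      Ideal.Quotient.mk (diamondIdeal K (m + 3)) (eS K m α β i) = 0) : p = 0 :=
  dia_indep K m δ hab hd p h

theorem dia_regA (hab : α * b + β * ((m + 3 : ℕ) : K) = 1)
    (hd : δ * (((m + 3 : ℕ) : K) ^ 2 - b ^ 2) = 1) (r : DR K m)
    (h : Ideal.Quotient.mk _ (th1 K m) * r = 0) : r = 0 := by
  refine gen_regA (thP K m b).toRingHom (fun i => Ideal.Quotient.mk _ (eS K m α β i))
    (dia_hind K m δ hab hd) (dia_hsp K m δ hab hd) r ?_
  rw [← thP_X0 K m (b := b)] at h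
  exact h

theorem dia_regB (hab : α * b + β * ((m + 3 : ℕ) : K) = 1)
    (hd : δ * (((m + 3 : ℕ) : K) ^ 2 - b ^ 2) = 1) (r s : DR K m)
    (h : Ideal.Quotient.mk _ (th2 K m b) * r = Ideal.Quotient.mk _ (th1 K m) * s) :
    ∃ u, r = Ideal.Quotient.mk _ (th1 K m) * u := by
  rw [← thP_X0 K m (b := b), ← thP_X1 K m (b := b)] at h
  obtain ⟨u, hu⟩ := gen_regB (thP K m b).toRingHom (fun i => Ideal.Quotient.mk _ (eS K m α β i))
    (dia_hind K m δ hab hd) (dia_hsp K m δ hab hd) r s h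
  refine ⟨u, ?_⟩
  rw [← thP_X0 K m (b := b)]
  exact hu

theorem dia_indA (hab : α * b + β * ((m + 3 : ℕ) : K) = 1)
    (hd : δ * (((m + 3 : ℕ) : K) ^ 2 - b ^ 2) = 1) (k : DI m → K) (r s : DR K m)
    (h : ∑ i, Ideal.Quotient.mk _ (C (k i)) * Ideal.Quotient.mk _ (eS K m α β i) =
      Ideal.Quotient.mk _ (th1 K m) * r + Ideal.Quotient.mk _ (th2 K m b) * s) : k = 0 := by
  refine gen_indA (thP K m b).toRingHom (fun i => Ideal.Quotient.mk _ (eS K m α β i))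
    (dia_hind K m δ hab hd) (dia_hsp K m δ hab hd) k r s ?_
  rw [← thP_X0 K m (b := b), ← thP_X1 K m (b := b)] at h
  refine Eq.trans (Finset.sum_congr rfl fun i _ => ?_) h
  rw [← thP_C K m (b := b)]
  rfl

theorem dia_spA (hab : α * b + β * ((m + 3 : ℕ) : K) = 1)
    (hd : δ * (((m + 3 : ℕ) : K) ^ 2 - b ^ 2) = 1) (r : DR K m) :
    ∃ (k : DI m → K) (u v : DR K m),
      r = ∑ i, Ideal.Quotient.mk _ (C (k i)) * Ideal.Quotient.mk _ (eS K m α β i) +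
      Ideal.Quotient.mk _ (th1 K m) * u + Ideal.Quotient.mk _ (th2 K m b) * v := by
  obtain ⟨k, u, v, h⟩ := gen_spA (thP K m b).toRingHom
    (fun i => Ideal.Quotient.mk _ (eS K m α β i)) (dia_hsp K m δ hab hd) r
  refine ⟨k, u, v, ?_⟩
  rw [← thP_X0 K m (b := b), ← thP_X1 K m (b := b)]
  refine h.trans ?_
  simp_rw [← thP_C K m (b := b)]
  rfl

end Dia3


section QuotMem
variable {S : Type*} [CommRing S] (I : Ideal S)

theorem mem_sup_one (a s : S) : s ∈ I ⊔ Ideal.span {a} ↔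
    ∃ u : S ⧸ I, Ideal.Quotient.mk I s = Ideal.Quotient.mk I a * u := by
  rw [Submodule.mem_sup]
  constructor
  · rintro ⟨y, hy, z, hz, rfl⟩
    obtain ⟨c, rfl⟩ := Ideal.mem_span_singleton'.mp hz
    refine ⟨Ideal.Quotient.mk I c, ?_⟩
    rw [map_add, Ideal.Quotient.eq_zero_iff_mem.mpr hy, map_mul]; ring
  · rintro ⟨u, hu⟩
    obtain ⟨c, rfl⟩ := Ideal.Quotient.mk_surjective u
    rw [← map_mul, Ideal.Quotient.eq] at hu
    exact ⟨_, hu, a * c, Ideal.mul_mem_right _ _ (Ideal.mem_span_singleton_self a), by ring⟩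

theorem mem_sup_two (a a' s : S) : s ∈ I ⊔ Ideal.span {a, a'} ↔
    ∃ u v : S ⧸ I, Ideal.Quotient.mk I s = Ideal.Quotient.mk I a * u + Ideal.Quotient.mk I a' * v := by
  rw [Submodule.mem_sup]
  constructor
  · rintro ⟨y, hy, z, hz, rfl⟩
    obtain ⟨c, c', rfl⟩ := Ideal.mem_span_pair.mp hz
    refine ⟨Ideal.Quotient.mk I c, Ideal.Quotient.mk I c', ?_⟩
    rw [map_add, Ideal.Quotient.eq_zero_iff_mem.mpr hy, map_add, map_mul, map_mul]; ring
  · rintro ⟨u, v, hu⟩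
    obtain ⟨c, rfl⟩ := Ideal.Quotient.mk_surjective u
    obtain ⟨c', rfl⟩ := Ideal.Quotient.mk_surjective v
    rw [← map_mul, ← map_mul, ← map_add, Ideal.Quotient.eq] at hu
    exact ⟨_, hu, a * c + a' * c', Ideal.mem_span_pair.mpr ⟨c, c', by ring⟩, by ring⟩

end QuotMem

section Dia4
variable (K : Type*) [Field K] (m : ℕ) {b α β : K} (δ : K)

theorem dia_regS1 (hab : α * b + β * ((m + 3 : ℕ) : K) = 1)
    (hd : δ * (((m + 3 : ℕ) : K) ^ 2 - b ^ 2) = 1) (s : DS K m)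
    (h : th1 K m * s ∈ diamondIdeal K (m + 3)) : s ∈ diamondIdeal K (m + 3) := by
  rw [← Ideal.Quotient.eq_zero_iff_mem] at h ⊢
  rw [map_mul] at h
  exact dia_regA K m δ hab hd _ h

theorem dia_regS2 (hab : α * b + β * ((m + 3 : ℕ) : K) = 1)
    (hd : δ * (((m + 3 : ℕ) : K) ^ 2 - b ^ 2) = 1) (s : DS K m)
    (h : th2 K m b * s ∈ diamondIdeal K (m + 3) ⊔ Ideal.span {th1 K m}) :
    s ∈ diamondIdeal K (m + 3) ⊔ Ideal.span {th1 K m} := by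
  rw [mem_sup_one] at h ⊢
  obtain ⟨u, hu⟩ := h
  rw [map_mul] at hu
  exact dia_regB K m δ hab hd _ _ hu

variable (b) in
/-- The ideal `I + (θ₁, θ₂)`. -/
noncomputable def DJ : Ideal (DS K m) := diamondIdeal K (m + 3) ⊔ Ideal.span {th1 K m, th2 K m b}

theorem dia_indS (hab : α * b + β * ((m + 3 : ℕ) : K) = 1)
    (hd : δ * (((m + 3 : ℕ) : K) ^ 2 - b ^ 2) = 1) (k : DI m → K)
    (h : ∑ i, C (k i) * eS K m α β i ∈ DJ K m b) : k = 0 := by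
  rw [DJ, mem_sup_two] at h
  obtain ⟨u, v, h⟩ := h
  refine dia_indA K m δ hab hd k u v ?_
  rw [← h, map_sum]
  simp_rw [map_mul]

theorem dia_spS (hab : α * b + β * ((m + 3 : ℕ) : K) = 1)
    (hd : δ * (((m + 3 : ℕ) : K) ^ 2 - b ^ 2) = 1) (s : DS K m) :
    ∃ k : DI m → K, s - ∑ i, C (k i) * eS K m α β i ∈ DJ K m b := by
  obtain ⟨k, u, v, h⟩ := dia_spA K m δ hab hd (Ideal.Quotient.mk _ s)
  refine ⟨k, ?_⟩
  rw [DJ, mem_sup_two]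
  refine ⟨u, v, ?_⟩
  rw [map_sub, h, map_sum]
  simp_rw [map_mul]
  ring

theorem dia_vne (hab : α * b + β * ((m + 3 : ℕ) : K) = 1)
    (hd : δ * (((m + 3 : ℕ) : K) ^ 2 - b ^ 2) = 1) : vS K m α β ∉ DJ K m b := by
  intro h
  have := dia_indS K m δ hab hd (Pi.single (.inr (.inr (.inr ()))) 1) (by
    rw [Finset.sum_eq_single (.inr (.inr (.inr ())))]
    · simpa [eS] using h
    · intro i _ hi
      simp [Pi.single_eq_of_ne hi]
    · simp)
  have h2 := congrFun this (.inr (.inr (.inr ())))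
  simp at h2

end Dia4


theorem soc_abs {K A : Type*} [Field K] [CommRing A] [Algebra K A] (m : ℕ)
    (x v : A) (y : Fin (m + 3) → A) (b α β δ : K)
    (hy : ∀ i j, i ≠ j → y i * y j = x * x)
    (hs : ∑ i, y i = algebraMap K A b * x)
    (hab : α * b + β * ((m + 3 : ℕ) : K) = 1)
    (hd : δ * (((m + 3 : ℕ) : K) ^ 2 - b ^ 2) = 1)
    (hv : v = algebraMap K A α * (x ^ 2 * y 0) + algebraMap K A β * x ^ 3)
    (l : Fin (m + 3) → A) (hl : l = fun i => if i = 0 then x else y i)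
    (hind : ∀ (k : K) (c q : Fin (m + 3) → K) (ρ : K), k • (1 : A) + ∑ i, c i • l i +
      ∑ i, q i • (x * l i) + ρ • v = 0 → k = 0 ∧ c = 0 ∧ q = 0 ∧ ρ = 0)
    (k : K) (c q : Fin (m + 3) → K) (ρ : K) (r : A)
    (hr : r = k • (1 : A) + ∑ i, c i • l i + ∑ i, q i • (x * l i) + ρ • v)
    (hxr : x * r = 0) (hyr : ∀ i, y i * r = 0) : r = ρ • v := by
  have hab' := congrArg (algebraMap K A) hab
  have hd' := congrArg (algebraMap K A) hd
  simp only [map_add, map_mul, map_one, map_sub, map_pow, map_natCast] at hab' hd'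
  obtain ⟨t1, t2, t3, t4, t5, t6⟩ := dia_table m x v y (algebraMap K A b) (algebraMap K A α)
    (algebraMap K A β) (algebraMap K A δ) _ rfl hy hs hab' hd' hv
  set N : K := ((m + 3 : ℕ) : K) with hN
  have hNA : ((m + 3 : ℕ) : A) = algebraMap K A N := by rw [hN, map_natCast]
  rw [hNA] at t1 t3 t4
  have hl0 : l 0 = x := by rw [hl]; simp
  have hlk : ∀ i, i ≠ 0 → l i = y i := by intro i hi; rw [hl]; simp [hi]
  have hxl : ∀ j, x * (x * l j) = (if j = 0 then N else b) • v := by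
    intro j
    by_cases hj : j = 0
    · rw [hj, hl0, t1]; simp [Algebra.smul_def]
    · rw [hlk j hj, t2]; simp [hj, Algebra.smul_def]
  have hyl : ∀ i j, y i * (x * l j) = ((if j = 0 then b else N) +
      (if i = j ∧ j ≠ 0 then b ^ 2 - N ^ 2 else 0)) • v := by
    intro i j
    by_cases hj : j = 0
    · rw [hj, hl0]
      simp only [ne_eq, not_true_eq_false, and_false, if_false, if_true, add_zero]
      rw [Algebra.smul_def, ← t2 i]; ring
    · rw [hlk j hj]
      by_cases hij : i = j
      · subst hij
        rw [t4]
        simp only [hj, ne_eq, not_false_eq_true, and_self, if_true, if_false, Algebra.smul_def]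
        simp only [map_add, map_sub, map_pow]; ring
      · rw [t3 i j hij]
        simp [hj, hij, Algebra.smul_def]
  have e1 : (0 : K) • (1 : A) + ∑ i, (Pi.single 0 k : Fin (m + 3) → K) i • l i +
      ∑ i, c i • (x * l i) + (∑ i, q i * (if i = 0 then N else b)) • v = 0 := by
    rw [← hxr, hr, Finset.sum_eq_single 0 (by intro i _ hi; simp [Pi.single_eq_of_ne hi]) (by simp)]
    simp only [Pi.single_eq_same, mul_add, Finset.mul_sum, mul_smul_comm, hxl, hl0, t5, mul_one,
      smul_zero, zero_smul, smul_smul, Finset.sum_smul]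
    ring
  obtain ⟨-, e2, e3, e4⟩ := hind _ _ _ _ e1
  have hk : k = 0 := by simpa using congrFun e2 0
  subst hk; subst e3
  simp only [zero_smul, Pi.zero_apply, Finset.sum_const_zero, zero_add] at hr
  have f1 : ∀ i, ∑ j, q j * (if j = 0 then b else N) + q i * (if i = 0 then 0 else b ^ 2 - N ^ 2) = 0 := by
    intro i
    refine (hind 0 0 0 _ ?_).2.2.2
    simp only [zero_smul, Pi.zero_apply, Finset.sum_const_zero, zero_add]
    rw [← hyr i, hr]
    simp only [mul_add, Finset.mul_sum, mul_smul_comm, hyl, t6, smul_zero, add_zero, smul_smul]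
    rw [← Finset.sum_smul, Finset.sum_add_distrib]
    congr 2
    rw [Finset.sum_eq_single i]
    · by_cases hi : i = 0 <;> simp [hi]
    · intro j _ hj
      have : ¬ (i = j) := fun h => hj h.symm
      simp [this]
    · simp
  have f0 := f1 0
  simp only [if_true, mul_zero, add_zero] at f0
  have hNb : b ^ 2 - N ^ 2 ≠ 0 := by
    intro h
    rw [show N ^ 2 - b ^ 2 = -(b ^ 2 - N ^ 2) by ring, h] at hd
    simp at hd
  have f2 : ∀ i, i ≠ 0 → q i = 0 := by
    intro i hi
    have := f1 i
    rw [f0] at this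
    simp only [hi, if_false, zero_add, mul_eq_zero, hNb, or_false] at this
    exact this
  rw [Finset.sum_eq_single 0 (by intro i _ hi; simp [f2 i hi]) (by simp)] at f0 e4
  simp only [if_true] at f0 e4
  have f3 : q 0 = 0 := by linear_combination (-q 0) * hab + α * f0 + β * e4
  have f4 : ∀ i, q i = 0 := by
    intro i
    by_cases hi : i = 0
    · rw [hi, f3]
    · exact f2 i hi
  rw [hr]
  simp [f4]

section Dia5
variable (K : Type*) [Field K] (m : ℕ) {b α β : K} (δ : K)

theorem mk_smul_eq {S : Type*} [CommRing S] [Algebra K S] (J : Ideal S) (k : K) (s : S) :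
    k • Ideal.Quotient.mk J s = Ideal.Quotient.mk J (algebraMap K S k * s) := by
  rw [← Algebra.smul_def]; rfl

theorem dia_setup : (∀ i j, i ≠ j → Ideal.Quotient.mk (DJ K m b) (yP K (m + 3) i) *
      Ideal.Quotient.mk (DJ K m b) (yP K (m + 3) j) = Ideal.Quotient.mk (DJ K m b) (xP K (m + 3)) *
      Ideal.Quotient.mk (DJ K m b) (xP K (m + 3))) ∧
    (∑ i, Ideal.Quotient.mk (DJ K m b) (yP K (m + 3) i) =
      algebraMap K _ b * Ideal.Quotient.mk (DJ K m b) (xP K (m + 3))) ∧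
    Ideal.Quotient.mk (DJ K m b) (zP K (m + 3)) = Ideal.Quotient.mk (DJ K m b) (xP K (m + 3)) := by
  have h1 : th1 K m ∈ DJ K m b :=
    (le_sup_right : _ ≤ DJ K m b) (Ideal.subset_span (by simp))
  have h2 : th2 K m b ∈ DJ K m b :=
    (le_sup_right : _ ≤ DJ K m b) (Ideal.subset_span (by simp))
  have hz : Ideal.Quotient.mk (DJ K m b) (zP K (m + 3)) = Ideal.Quotient.mk (DJ K m b) (xP K (m + 3)) := by
    symm
    rw [Ideal.Quotient.eq]; exact h1
  refine ⟨?_, ?_, hz⟩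
  · intro i j hij
    have h3 : yP K (m + 3) i * yP K (m + 3) j - xP K (m + 3) * zP K (m + 3) ∈ DJ K m b :=
      (le_sup_left : _ ≤ DJ K m b) (dia_rel K m i j hij)
    rw [← Ideal.Quotient.eq, map_mul, map_mul, hz] at h3
    exact h3
  · rw [th2, ← Ideal.Quotient.eq, map_sum, map_mul] at h2
    exact h2

theorem dia_Xv (hab : α * b + β * ((m + 3 : ℕ) : K) = 1)
    (hd : δ * (((m + 3 : ℕ) : K) ^ 2 - b ^ 2) = 1) (i) : X i * vS K m α β ∈ DJ K m b := by
  obtain ⟨h1, h2, h3⟩ := dia_setup K m (b := b)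
  have hab' := congrArg (algebraMap K (DS K m ⧸ DJ K m b)) hab
  have hd' := congrArg (algebraMap K (DS K m ⧸ DJ K m b)) hd
  simp only [map_add, map_mul, map_one, map_sub, map_pow, map_natCast] at hab' hd'
  obtain ⟨-, -, -, -, t5, t6⟩ := dia_table m _ (Ideal.Quotient.mk (DJ K m b) (vS K m α β)) _ _
    (algebraMap K _ α) (algebraMap K _ β) _ _ rfl h1 h2 hab' hd' (by
      rw [vS, map_add, map_mul, map_mul, map_mul, map_pow, map_pow]; rfl)
  rw [← Ideal.Quotient.eq_zero_iff_mem, map_mul]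
  rcases dia_var K m i with h | h | ⟨j, h⟩
  · rw [h, t5]
  · rw [h, h3, t5]
  · rw [h, t6]

theorem dia_socle (hab : α * b + β * ((m + 3 : ℕ) : K) = 1)
    (hd : δ * (((m + 3 : ℕ) : K) ^ 2 - b ^ 2) = 1) (r : DS K m)
    (hr : ∀ i, X i * r ∈ DJ K m b) : ∃ c : K, r - C c * vS K m α β ∈ DJ K m b := by
  obtain ⟨h1, h2, h3⟩ := dia_setup K m (b := b)
  obtain ⟨k, hk⟩ := dia_spS K m δ hab hd r
  have hsum : ∀ k : DI m → K, Ideal.Quotient.mk (DJ K m b) (∑ i, C (k i) * eS K m α β i) =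
      k (.inl ()) • (1 : DS K m ⧸ DJ K m b) + ∑ i, k (.inr (.inl i)) • Ideal.Quotient.mk (DJ K m b) (lS K m i) +
      ∑ i, k (.inr (.inr (.inl i))) • (Ideal.Quotient.mk (DJ K m b) (xP K (m + 3)) *
        Ideal.Quotient.mk (DJ K m b) (lS K m i)) +
      k (.inr (.inr (.inr ()))) • Ideal.Quotient.mk (DJ K m b) (vS K m α β) := by
    intro k
    rw [← map_one (Ideal.Quotient.mk (DJ K m b))]
    simp only [← map_mul, mk_smul_eq, ← map_sum, ← map_add]
    congr 1
    simp [eS, algebraMap_eq, add_assoc]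
  refine ⟨k (.inr (.inr (.inr ()))), ?_⟩
  rw [← Ideal.Quotient.eq] at hk ⊢
  have := soc_abs m _ (Ideal.Quotient.mk (DJ K m b) (vS K m α β)) _ b α β δ h1 h2 hab hd (by
      rw [vS, map_add, map_mul, map_mul, map_mul, map_pow, map_pow]; rfl)
      (fun i => Ideal.Quotient.mk (DJ K m b) (lS K m i)) (by
        funext i
        rw [lS]; split <;> rfl) ?_ _ _ _ _ _ (hk.trans (hsum k)) ?_ ?_
  · rw [this, mk_smul_eq]; rfl
  · intro k c q ρ h
    let kk : DI m → K := Sum.elim (fun _ => k) (Sum.elim c (Sum.elim q (fun _ => ρ)))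
    have h4 := hsum kk
    have h5 := h4.trans h
    rw [Ideal.Quotient.eq_zero_iff_mem] at h5
    have h6 := dia_indS K m δ hab hd kk h5
    refine ⟨congrFun h6 (.inl ()), ?_, ?_, congrFun h6 (.inr (.inr (.inr ())))⟩
    · funext i
      exact congrFun h6 (.inr (.inl i))
    · funext i
      exact congrFun h6 (.inr (.inr (.inl i)))
  · rw [← map_mul, Ideal.Quotient.eq_zero_iff_mem]
    exact hr 0
  · intro i
    rw [← map_mul, Ideal.Quotient.eq_zero_iff_mem]
    exact hr _

end Dia5


section Dia6
variable (K : Type*) [Field K] (m : ℕ)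

theorem dia_consts : ∃ b α β δ : K, α * b + β * ((m + 3 : ℕ) : K) = 1 ∧
    δ * (((m + 3 : ℕ) : K) ^ 2 - b ^ 2) = 1 := by
  by_cases h : ((m + 3 : ℕ) : K) = 0
  · exact ⟨1, 1, 0, -1, by rw [h]; ring, by rw [h]; ring⟩
  · refine ⟨0, 0, (((m + 3 : ℕ) : K))⁻¹, ((((m + 3 : ℕ) : K))⁻¹) ^ 2, ?_, ?_⟩
    · rw [inv_mul_cancel₀ h]; ring
    · rw [show (0 : K) ^ 2 = 0 by ring, sub_zero, ← mul_pow, inv_mul_cancel₀ h, one_pow]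

theorem dia_CM : IsCMquot (diamondIdeal K (m + 3)) := by
  obtain ⟨b, α, β, δ, hab, hd⟩ := dia_consts K m
  refine ⟨2, dia_dim K m δ hab hd, ![Ideal.Quotient.mk _ (th1 K m), Ideal.Quotient.mk _ (th2 K m b)],
    ?_, ?_, ?_⟩
  · have hX : ∀ i, (X i : DS K m) ∈ Ideal.span (Set.range (X : _ → DS K m)) :=
      fun i => Ideal.subset_span ⟨i, rfl⟩
    intro i
    fin_cases i
    · exact Ideal.mem_map_of_mem _ (Ideal.sub_mem _ (hX _) (hX _))
    · refine Ideal.mem_map_of_mem _ (Ideal.sub_mem _ (Ideal.sum_mem _ fun i _ => hX _) ?_)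
      exact Ideal.mul_mem_left _ _ (hX _)
  · intro k s hs
    fin_cases k
    · have h0 : {j : Fin 2 | j < 0} = ∅ := by ext j; simp
      simp only [Fin.zero_eta, h0, Set.image_empty, Ideal.span_empty, Ideal.mem_bot,
        Matrix.cons_val_zero] at hs ⊢
      exact dia_regA K m δ hab hd s hs
    · have h0 : {j : Fin 2 | j < 1} = {0} := by ext j; fin_cases j <;> simp
      simp only [Fin.mk_one, h0, Set.image_singleton, Matrix.cons_val_zero, Matrix.cons_val_one,
        Ideal.mem_span_singleton'] at hs ⊢
      obtain ⟨a, ha⟩ := hs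
      obtain ⟨u, hu⟩ := dia_regB K m δ hab hd s a (by rw [← ha]; ring)
      exact ⟨u, by rw [hu]; ring⟩
  · intro htop
    have h1 : Ideal.Quotient.mk (diamondIdeal K (m + 3)) (vS K m α β) ∈
        Ideal.span (Set.range ![Ideal.Quotient.mk (diamondIdeal K (m + 3)) (th1 K m),
          Ideal.Quotient.mk _ (th2 K m b)]) := by
      rw [htop]; trivial
    rw [Matrix.range_cons, Matrix.range_cons, Matrix.range_empty, Set.union_empty,
      Set.singleton_union, Ideal.mem_span_pair] at h1
    obtain ⟨u, v, h⟩ := h1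
    refine dia_vne K m δ hab hd ?_
    rw [DJ, mem_sup_two]
    exact ⟨u, v, by rw [← h]; ring⟩

end Dia6


section TorPart

section JFdef
variable {S : Type*} [CommRing S]

/-- Vectors with all coordinates in the ideal `J`. -/
def JF (B : Type*) (J : Ideal S) : Submodule S (B →₀ S) where
  carrier := {u | ∀ c, u c ∈ J}
  add_mem' := fun {u v} hu hv c => by
    rw [Finsupp.add_apply]; exact J.add_mem (hu c) (hv c)
  zero_mem' := fun c => by rw [Finsupp.zero_apply]; exact J.zero_mem
  smul_mem' := fun s u hu c => by
    rw [Finsupp.smul_apply, smul_eq_mul]; exact J.mul_mem_left _ (hu c)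

theorem mem_JF {B : Type*} {J : Ideal S} {u : B →₀ S} : u ∈ JF B J ↔ ∀ c, u c ∈ J := Iff.rfl

theorem JF_mono {B : Type*} {J J' : Ideal S} (h : J ≤ J') : JF B J ≤ JF B J' :=
  fun _ hu c => h (hu c)

theorem JF_smul {B : Type*} {J : Ideal S} {a : S} (ha : a ∈ J) (u : B →₀ S) : a • u ∈ JF B J :=
  fun c => by rw [Finsupp.smul_apply, smul_eq_mul]; exact J.mul_mem_right _ ha

theorem JF_map {B B' : Type*} {J : Ideal S} (d : (B →₀ S) →ₗ[S] (B' →₀ S)) {u : B →₀ S}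
    (hu : u ∈ JF B J) : d u ∈ JF B' J := by
  rw [← Finsupp.sum_single u, Finsupp.sum, map_sum]
  refine Submodule.sum_mem _ fun b _ => ?_
  rw [← mul_one (u b), ← smul_eq_mul, ← Finsupp.smul_single, map_smul]
  exact JF_smul (hu b) _

theorem JF_eps {B : Type*} {J : Ideal S} (d : (B →₀ S) →ₗ[S] S) {u : B →₀ S}
    (hu : u ∈ JF B J) : d u ∈ J := by
  rw [← Finsupp.sum_single u, Finsupp.sum, map_sum]
  refine Submodule.sum_mem _ fun b _ => ?_
  rw [← mul_one (u b), ← smul_eq_mul, ← Finsupp.smul_single, map_smul]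
  exact J.mul_mem_right _ (hu b)

theorem JF_split {B : Type*} {J : Ideal S} {a : S} {u : B →₀ S}
    (hu : u ∈ JF B (J ⊔ Ideal.span {a})) : ∃ w : B →₀ S, u - a • w ∈ JF B J := by
  classical
  have h1 : ∀ s : S, ∃ t, (s = 0 → t = 0) ∧ (s ∈ J ⊔ Ideal.span {a} → s - a * t ∈ J) := by
    intro s
    by_cases hs : s = 0
    · exact ⟨0, fun _ => rfl, fun _ => by rw [hs]; simp⟩
    · by_cases hs' : s ∈ J ⊔ Ideal.span {a}
      · obtain ⟨j, hj, t, ht, rfl⟩ := Submodule.mem_sup.mp hs'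
        obtain ⟨c, rfl⟩ := Ideal.mem_span_singleton'.mp ht
        exact ⟨c, fun h => absurd h hs, fun _ => by
          rw [show j + c * a - a * c = j by ring]; exact hj⟩
      · exact ⟨0, fun h => absurd h hs, fun h => absurd h hs'⟩
  choose g hg0 hg using h1
  refine ⟨u.mapRange g (hg0 0 rfl), fun c => ?_⟩
  rw [Finsupp.sub_apply, Finsupp.smul_apply, Finsupp.mapRange_apply, smul_eq_mul]
  exact hg _ (hu c)

theorem JF_cancel {B : Type*} {J : Ideal S} {a : S} (ha : ∀ s, a * s ∈ J → s ∈ J) {u : B →₀ S}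
    (hu : a • u ∈ JF B J) : u ∈ JF B J := by
  intro c
  have := hu c
  rw [Finsupp.smul_apply, smul_eq_mul] at this
  exact ha _ this

end JFdef

namespace MinGradedFreeRes
variable {K : Type*} [Field K] {σ : Type*} {I : Ideal (MvPolynomial σ K)}
  (F : MinGradedFreeRes K σ I)

theorem dd (i : ℕ) (v) : F.d i (F.d (i + 1) v) = 0 := by
  have : F.d (i + 1) v ∈ LinearMap.ker (F.d i) := by
    rw [← F.exact i]; exact LinearMap.mem_range_self _ _
  exact this

theorem εd (v) : F.ε (F.d 0 v) ∈ I := by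
  have : F.d 0 v ∈ Submodule.comap F.ε (I : Submodule _ _) := by
    rw [← F.exact0]; exact LinearMap.mem_range_self _ _
  exact this

theorem E0 (J : Ideal (MvPolynomial σ K)) (w : F.B 0 →₀ MvPolynomial σ K)
    (hw : F.ε w ∈ I ⊔ J) : ∃ v, w - F.d 0 v ∈ JF (F.B 0) J := by
  obtain ⟨i, hi, j, hj, hij⟩ := Submodule.mem_sup.mp hw
  obtain ⟨t, ht⟩ := F.surj 1
  have h1 : w - j • t ∈ Submodule.comap F.ε (I : Submodule _ _) := by
    rw [Submodule.mem_comap, map_sub, map_smul, ← hij, smul_eq_mul]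
    rw [show i + j - j * F.ε t = i - j * (F.ε t - 1) by ring]
    exact I.sub_mem hi (I.mul_mem_left _ ht)
  rw [← F.exact0] at h1
  obtain ⟨v, hv⟩ := h1
  refine ⟨v, ?_⟩
  rw [hv, sub_sub_cancel]
  exact JF_smul hj t

/-- Exactness of `F ⊗ S/J` at position `q+1`. -/
def EE (J : Ideal (MvPolynomial σ K)) (q : ℕ) : Prop :=
  ∀ u, F.d q u ∈ JF (F.B q) J → ∃ v, u - F.d (q + 1) v ∈ JF (F.B (q + 1)) J

theorem EE_bot (q : ℕ) : F.EE ⊥ q := by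
  intro u hu
  have h0 : F.d q u = 0 := by
    ext1 c
    exact hu c
  have h1 : u ∈ LinearMap.ker (F.d q) := h0
  rw [← F.exact q] at h1
  obtain ⟨v, rfl⟩ := h1
  exact ⟨v, by rw [sub_self]; exact Submodule.zero_mem _⟩

variable {J : Ideal (MvPolynomial σ K)} {a : MvPolynomial σ K}

theorem EE_finish {q : ℕ} (hE : F.EE J q) (u v) 
    (h : F.d q (u - a • v) ∈ JF (F.B q) J) :
    ∃ v, u - F.d (q + 1) v ∈ JF (F.B (q + 1)) (J ⊔ Ideal.span {a}) := by
  obtain ⟨t, ht⟩ := hE _ h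
  refine ⟨t, ?_⟩
  rw [show u - F.d (q + 1) t = (u - a • v - F.d (q + 1) t) + a • v by abel]
  exact Submodule.add_mem _ (JF_mono le_sup_left ht)
    (JF_smul ((le_sup_right : _ ≤ J ⊔ Ideal.span {a}) (Ideal.mem_span_singleton_self a)) _)

theorem EE_step0 (haI : ∀ s, a * s ∈ I ⊔ J → s ∈ I ⊔ J)
    (hE : F.EE J 0) : F.EE (J ⊔ Ideal.span {a}) 0 := by
  intro u hu
  obtain ⟨w, hw⟩ := JF_split hu
  have h1 : F.ε w ∈ I ⊔ J := by
    apply haI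
    have h2 := JF_eps F.ε hw
    rw [map_sub, map_smul, smul_eq_mul] at h2
    rw [show a * F.ε w = F.ε (F.d 0 u) - (F.ε (F.d 0 u) - a * F.ε w) by ring]
    exact Ideal.sub_mem _ ((le_sup_left : I ≤ I ⊔ J) (F.εd u)) ((le_sup_right : J ≤ I ⊔ J) h2)
  obtain ⟨v, hv⟩ := F.E0 J w h1
  refine F.EE_finish hE u v ?_
  rw [map_sub, map_smul, show F.d 0 u - a • F.d 0 v = (F.d 0 u - a • w) + a • (w - F.d 0 v) by
    rw [smul_sub]; abel]
  exact Submodule.add_mem _ hw (Submodule.smul_mem _ _ hv)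

theorem EE_step {q : ℕ} (ha : ∀ s, a * s ∈ J → s ∈ J)
    (hE : F.EE J q) (hE' : F.EE J (q + 1)) : F.EE (J ⊔ Ideal.span {a}) (q + 1) := by
  intro u hu
  obtain ⟨w, hw⟩ := JF_split hu
  have h1 : F.d q w ∈ JF (F.B q) J := by
    apply JF_cancel ha
    have h2 := JF_map (F.d q) hw
    rw [map_sub, F.dd, zero_sub, map_smul] at h2
    exact (Submodule.neg_mem_iff _).mp h2
  obtain ⟨v, hv⟩ := hE w h1
  refine F.EE_finish hE' u v ?_
  rw [map_sub, map_smul, show F.d (q+1) u - a • F.d (q+1) v =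
    (F.d (q+1) u - a • w) + a • (w - F.d (q+1) v) by rw [smul_sub]; abel]
  exact Submodule.add_mem _ hw (Submodule.smul_mem _ _ hv)

/-- cycles -/
def ZZ (J : Ideal (MvPolynomial σ K)) : (k : ℕ) → (F.B k →₀ MvPolynomial σ K) → Prop
  | 0, _ => True
  | k + 1, u => F.d k u ∈ JF (F.B k) J

/-- boundaries -/
def BB (J : Ideal (MvPolynomial σ K)) (k : ℕ) (u : F.B k →₀ MvPolynomial σ K) : Prop :=
  ∃ v, u - F.d k v ∈ JF (F.B k) J

/-- zigzag relation; `J k = (a_0, …, a_{k-1})`. -/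
def Rel (a : ℕ → MvPolynomial σ K) (J : ℕ → Ideal (MvPolynomial σ K)) :
    (k : ℕ) → (F.B k →₀ MvPolynomial σ K) → MvPolynomial σ K → Prop
  | 0, u, r => F.ε u - r ∈ I ⊔ J 0
  | k + 1, u, r => ∃ u', F.d k u - a k • u' ∈ JF (F.B k) (J k) ∧ Rel a J k u' r

theorem Rel_add (a : ℕ → MvPolynomial σ K) (J : ℕ → Ideal (MvPolynomial σ K)) (k : ℕ) (s)
    {u v r t} (h : F.Rel a J k u r) (h' : F.Rel a J k v t) :
    F.Rel a J k (u + s • v) (r + s * t) := by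
  induction k generalizing r t with
  | zero =>
    simp only [Rel] at *
    rw [map_add, map_smul, smul_eq_mul, show F.ε u + s * F.ε v - (r + s * t) =
      (F.ε u - r) + s * (F.ε v - t) by ring]
    exact Ideal.add_mem _ h (Ideal.mul_mem_left _ _ h')
  | succ k ih =>
    obtain ⟨u', h1, h2⟩ := h
    obtain ⟨v', h1', h2'⟩ := h'
    refine ⟨u' + s • v', ?_, ih h2 h2'⟩
    rw [map_add, map_smul, show F.d k u + s • F.d k v - a k • (u' + s • v') =
      (F.d k u - a k • u') + s • (F.d k v - a k • v') by
        rw [smul_sub, smul_add, smul_comm s (a k)]; abel]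
    exact Submodule.add_mem _ h1 (Submodule.smul_mem _ _ h1')

theorem Rel_zero (a : ℕ → MvPolynomial σ K) (J : ℕ → Ideal (MvPolynomial σ K)) (k : ℕ) :
    F.Rel a J k 0 0 := by
  induction k with
  | zero => simp [Rel]
  | succ k ih => exact ⟨0, by simp, ih⟩

theorem Rel_smul (a : ℕ → MvPolynomial σ K) (J : ℕ → Ideal (MvPolynomial σ K)) (k : ℕ) (s)
    {v t} (h' : F.Rel a J k v t) : F.Rel a J k (s • v) (s * t) := by
  have := F.Rel_add a J k s (F.Rel_zero a J k) h'
  rwa [zero_add, zero_add] at this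

theorem ZZ_smul (k : ℕ) (s : MvPolynomial σ K) {u} (h : F.ZZ J k u) : F.ZZ J k (s • u) := by
  cases k with
  | zero => trivial
  | succ k =>
    simp only [ZZ] at *
    rw [map_smul]
    exact Submodule.smul_mem _ _ h

theorem ZZ_of {k : ℕ} (ha : ∀ s, a * s ∈ J → s ∈ J) {u u'}
    (h : F.d k u - a • u' ∈ JF (F.B k) J) : F.ZZ J k u' := by
  cases k with
  | zero => trivial
  | succ k =>
    simp only [ZZ]
    apply JF_cancel ha
    have h2 := JF_map (F.d k) h
    rw [map_sub, F.dd, zero_sub, map_smul] at h2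
    exact (Submodule.neg_mem_iff _).mp h2

theorem zigzag (a : ℕ → MvPolynomial σ K) (J : ℕ → Ideal (MvPolynomial σ K)) (n : ℕ)
    (hJ : ∀ k, J (k + 1) = J k ⊔ Ideal.span {a k})
    (ha : ∀ k < n, ∀ s, a k * s ∈ J k → s ∈ J k)
    (hE : ∀ k < n, F.EE (J k) k) (k : ℕ) (hk : k ≤ n) :
    (∀ u, F.ZZ (J k) k u → ∃ r, (∀ l < k, a l * r ∈ I ⊔ J 0) ∧ F.Rel a J k u r) ∧
    (∀ r, (∀ l < k, a l * r ∈ I ⊔ J 0) → ∃ u, F.ZZ (J k) k u ∧ F.Rel a J k u r) ∧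
    (∀ u r, F.ZZ (J k) k u → F.Rel a J k u r → (r ∈ I ⊔ J 0 ↔ F.BB (J k) k u)) := by
  induction k with
  | zero =>
    refine ⟨fun u _ => ⟨F.ε u, by simp, by simp [Rel]⟩, fun r _ => ?_, fun u r _ h => ?_⟩
    · obtain ⟨t, ht⟩ := F.surj r
      exact ⟨t, trivial, (le_sup_left : I ≤ I ⊔ J 0) ht⟩
    · simp only [Rel] at h
      have h1 : r ∈ I ⊔ J 0 ↔ F.ε u ∈ I ⊔ J 0 := by
        constructor
        · intro hr
          have := Ideal.add_mem _ h hr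
          rwa [sub_add_cancel] at this
        · intro hr
          have := Ideal.sub_mem _ hr h
          rwa [sub_sub_cancel] at this
      rw [h1]
      constructor
      · exact fun h => F.E0 _ u h
      · rintro ⟨v, hv⟩
        have h2 := JF_eps F.ε hv
        rw [map_sub] at h2
        have := Ideal.add_mem _ ((le_sup_right : J 0 ≤ I ⊔ J 0) h2)
          ((le_sup_left : I ≤ I ⊔ J 0) (F.εd v))
        rwa [sub_add_cancel] at this
  | succ k ih =>
    obtain ⟨i1, i2, i3⟩ := ih (by omega)
    have hak := ha k (by omega)
    have haJ : a k ∈ J (k + 1) := by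
      rw [hJ]
      exact (le_sup_right : _ ≤ J k ⊔ Ideal.span {a k}) (Ideal.mem_span_singleton_self _)
    have hJle : J k ≤ J (k + 1) := by rw [hJ]; exact le_sup_left
    refine ⟨fun u hu => ?_, fun r hr => ?_, fun u r hu => ?_⟩
    · simp only [ZZ] at hu
      rw [hJ] at hu
      obtain ⟨u', hu'⟩ := JF_split hu
      have hz := F.ZZ_of hak hu'
      obtain ⟨r, hr, hrel⟩ := i1 u' hz
      refine ⟨r, fun l hl => ?_, u', hu', hrel⟩
      rcases Nat.lt_succ_iff_lt_or_eq.mp hl with hl | rfl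
      · exact hr l hl
      · rw [i3 _ _ (F.ZZ_smul l (a l) hz) (F.Rel_smul a J l (a l) hrel)]
        refine ⟨u, ?_⟩
        rw [← neg_sub]
        exact Submodule.neg_mem _ hu'
    · obtain ⟨u', hz, hrel⟩ := i2 r (fun l hl => hr l (by omega))
      have := (i3 _ _ (F.ZZ_smul k (a k) hz) (F.Rel_smul a J k (a k) hrel)).mp (hr k (by omega))
      obtain ⟨u, hu⟩ := this
      refine ⟨u, ?_, u', ?_, hrel⟩
      · simp only [ZZ]
        rw [show F.d k u = a k • u' - (a k • u' - F.d k u) by abel]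
        exact Submodule.sub_mem _ (JF_smul haJ _) (JF_mono hJle hu)
      · rw [← neg_sub]
        exact Submodule.neg_mem _ hu
    · rintro ⟨u', hu', hrel⟩
      have hz := F.ZZ_of hak hu'
      rw [i3 _ _ hz hrel]
      constructor
      · rintro ⟨v, hv⟩
        have := F.EE_finish (hE k (by omega)) (a := a k) u v (by
          rw [map_sub, map_smul, show F.d k u - a k • F.d k v =
            (F.d k u - a k • u') + a k • (u' - F.d k v) by rw [smul_sub]; abel]
          exact Submodule.add_mem _ hu' (Submodule.smul_mem _ _ hv))
        rw [← hJ] at this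
        exact this
      · rintro ⟨w, hw⟩
        rw [hJ] at hw
        obtain ⟨v, hv⟩ := JF_split hw
        refine ⟨v, JF_cancel hak ?_⟩
        have h2 := JF_map (F.d k) hv
        rw [map_sub, map_sub, F.dd, sub_zero, map_smul] at h2
        rw [show a k • (u' - F.d k v) = (F.d k u - a k • F.d k v) - (F.d k u - a k • u') by
          rw [smul_sub]; abel]
        exact Submodule.sub_mem _ h2 hu'

end MinGradedFreeRes

end TorPart


namespace MinGradedFreeRes
variable {K : Type*} [Field K] {σ : Type*} {I : Ideal (MvPolynomial σ K)}
  (F : MinGradedFreeRes K σ I)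

theorem d_min (J : Ideal (MvPolynomial σ K)) (hJ : ∀ s, coeff 0 s = 0 → s ∈ J) (i : ℕ) (u) :
    F.d i u ∈ JF (F.B i) J := by
  rw [← Finsupp.sum_single u, Finsupp.sum, map_sum]
  refine Submodule.sum_mem _ fun b _ => ?_
  rw [← mul_one (u b), ← smul_eq_mul, ← Finsupp.smul_single, map_smul]
  exact Submodule.smul_mem _ _ fun c => hJ _ (F.minimal i b c)

theorem tor_final (n : ℕ) (A : ℕ → MvPolynomial σ K) (JJ : ℕ → Ideal (MvPolynomial σ K))
    (hJ0 : JJ 0 = ⊥) (hJ : ∀ k, JJ (k + 1) = JJ k ⊔ Ideal.span {A k})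
    (hA : ∀ k < n + 2, ∀ s, A k * s ∈ JJ k → s ∈ JJ k)
    (hI0 : ∀ s, A 0 * s ∈ I ⊔ JJ 0 → s ∈ I ⊔ JJ 0)
    (hI1 : ∀ s, A 1 * s ∈ I ⊔ JJ 1 → s ∈ I ⊔ JJ 1)
    (hm : ∀ s, s ∈ JJ (n + 2) ↔ coeff 0 s = 0)
    (v : MvPolynomial σ K) (hv0 : v ∉ I ⊔ JJ 2) (hv : ∀ l < n, A (l + 2) * v ∈ I ⊔ JJ 2)
    (hsoc : ∀ r, (∀ l < n, A (l + 2) * r ∈ I ⊔ JJ 2) → ∃ c : K, r - C c * v ∈ I ⊔ JJ 2) :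
    Nat.card (F.B n) = 1 ∧ ∀ q, n < q → IsEmpty (F.B q) := by
  have e0 : ∀ q, F.EE (JJ 0) q := fun q => by rw [hJ0]; exact F.EE_bot q
  have e1 : ∀ q, F.EE (JJ 1) q := fun q => by
    rw [hJ 0]
    cases q with
    | zero => exact F.EE_step0 hI0 (e0 0)
    | succ q => exact F.EE_step (hA 0 (by omega)) (e0 q) (e0 (q + 1))
  have e2 : ∀ q, F.EE (JJ 2) q := fun q => by
    rw [hJ 1]
    cases q with
    | zero => exact F.EE_step0 hI1 (e1 0)
    | succ q => exact F.EE_step (hA 1 (by omega)) (e1 q) (e1 (q + 1))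
  have e3 : ∀ k ≤ n, ∀ q, k ≤ q → F.EE (JJ (k + 2)) q := by
    intro k
    induction k with
    | zero => exact fun _ q _ => e2 q
    | succ k ih =>
      intro hk q hq
      obtain ⟨q, rfl⟩ : ∃ q', q = q' + 1 := ⟨q - 1, by omega⟩
      rw [show k + 1 + 2 = (k + 2) + 1 by ring, hJ]
      exact F.EE_step (hA _ (by omega)) (ih (by omega) q (by omega)) (ih (by omega) _ (by omega))
  have hmin : ∀ i u, F.d i u ∈ JF (F.B i) (JJ (n + 2)) :=
    fun i u => F.d_min _ (fun s hs => (hm s).mpr hs) i u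
  have hone : ∀ q (b : F.B q), Finsupp.single b 1 ∉ JF (F.B q) (JJ (n + 2)) := by
    intro q b h
    have := (hm _).mp (h b)
    simp at this
  constructor
  · obtain ⟨z1, z2, z3⟩ := F.zigzag (fun k => A (k + 2)) (fun k => JJ (k + 2)) n
      (fun k => hJ (k + 2)) (fun k hk => hA _ (by omega)) (fun k hk => e3 k hk.le k le_rfl) n le_rfl
    have hZ : ∀ u, F.ZZ (JJ (n + 2)) n u := by
      intro u
      cases n with
      | zero => trivial
      | succ n => exact hmin n u
    have hB : ∀ u, F.BB (JJ (n + 2)) n u ↔ u ∈ JF (F.B n) (JJ (n + 2)) := by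
      intro u
      constructor
      · rintro ⟨w, hw⟩
        have := Submodule.add_mem _ hw (hmin n w)
        rwa [sub_add_cancel] at this
      · intro h
        exact ⟨0, by rwa [map_zero, sub_zero]⟩
    obtain ⟨u0, -, hu0⟩ := z2 v hv
    have hu0' : u0 ∉ JF (F.B n) (JJ (n + 2)) := by
      rw [← hB, ← z3 u0 v (hZ _) hu0]
      exact hv0
    have key : ∀ u, ∃ c : K, u - (C c : MvPolynomial σ K) • u0 ∈ JF (F.B n) (JJ (n + 2)) := by
      intro u
      obtain ⟨r, hr, hrel⟩ := z1 u (hZ u)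
      obtain ⟨c, hc⟩ := hsoc r hr
      refine ⟨c, ?_⟩
      have h1 := F.Rel_add _ _ n (-C c) hrel hu0
      rw [← hB, sub_eq_add_neg, ← neg_smul, ← z3 _ _ (hZ _) h1]
      rw [neg_mul, ← sub_eq_add_neg]
      exact hc
    rw [Nat.card_eq_one_iff_unique]
    constructor
    · refine ⟨fun b b' => ?_⟩
      by_contra hbb
      have hco : ∀ b : F.B n, ∃ c : K, c * coeff 0 (u0 b) = 1 ∧
          ∀ b', b ≠ b' → c * coeff 0 (u0 b') = 0 := by
        intro b
        obtain ⟨c, hc⟩ := key (Finsupp.single b 1)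
        refine ⟨c, ?_, fun b' hb => ?_⟩
        · have := (hm _).mp (hc b)
          simp [coeff_C_mul, sub_eq_zero] at this
          exact this.symm
        · have := (hm _).mp (hc b')
          simp [coeff_C_mul, hb] at this
          simpa using this
      obtain ⟨c, h1, h2⟩ := hco b
      obtain ⟨c', h3, h4⟩ := hco b'
      have h5 := h2 b' hbb
      have hc : c ≠ 0 := by rintro rfl; simp at h1
      rw [mul_eq_zero, or_iff_right hc] at h5
      rw [h5] at h3
      simp at h3
    · by_contra hne
      rw [not_nonempty_iff] at hne
      exact hu0' fun c => (hne.false c).elim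
  · intro q hq
    refine ⟨fun b => ?_⟩
    obtain ⟨q, rfl⟩ : ∃ q', q = q' + 1 := ⟨q - 1, by omega⟩
    obtain ⟨w, hw⟩ := e3 n le_rfl q (by omega) (Finsupp.single b 1) (hmin _ _)
    have := Submodule.add_mem _ hw (hmin (q + 1) w)
    rw [sub_add_cancel] at this
    exact hone _ b this

end MinGradedFreeRes


section RegSeq
variable {K : Type*} [Field K] {N : ℕ} (s t : MvPolynomial (Fin N) K →ₐ[K] MvPolynomial (Fin N) K)

/-- sequence of images of the variables -/
noncomputable def seqA (k : ℕ) : MvPolynomial (Fin N) K := if h : k < N then s (X ⟨k, h⟩) else 0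

/-- ideal generated by the first `k` elements -/
noncomputable def seqJ (k : ℕ) : Ideal (MvPolynomial (Fin N) K) := Ideal.span (seqA s '' Set.Iio k)

theorem seqJ_zero : seqJ s 0 = ⊥ := by
  rw [seqJ, show Set.Iio 0 = (∅ : Set ℕ) by ext; simp]; simp

theorem seqJ_succ (k : ℕ) : seqJ s (k + 1) = seqJ s k ⊔ Ideal.span {seqA s k} := by
  rw [seqJ, show Set.Iio (k + 1) = insert k (Set.Iio k) by ext j; simp only [Set.mem_Iio, Set.mem_insert_iff]; omega, Set.image_insert_eq,
    Ideal.span_insert, sup_comm]; rfl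

theorem seqJ_mem (hst : ∀ p, s (t p) = p) (hts : ∀ p, t (s p) = p) (k : ℕ) (hk : k ≤ N) (p) :
    p ∈ seqJ s k ↔ t p ∈ Ideal.span (X '' {j : Fin N | j.1 < k}) := by
  have h1 : seqJ s k = Ideal.map s (Ideal.span (X '' {j : Fin N | j.1 < k})) := by
    rw [Ideal.map_span, seqJ]
    congr 1
    ext q
    constructor
    · rintro ⟨j, hj, rfl⟩
      have hj' : j < k := hj
      refine ⟨X ⟨j, by omega⟩, ⟨⟨j, by omega⟩, hj', rfl⟩, ?_⟩
      rw [seqA, dif_pos]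
    · rintro ⟨_, ⟨j, hj, rfl⟩, rfl⟩
      refine ⟨j, hj, ?_⟩
      rw [seqA, dif_pos j.2]
  constructor
  · intro h
    rw [h1] at h
    have h2 := Ideal.mem_map_of_mem t h
    rw [Ideal.map_mapₐ] at h2
    have h3 : t.comp s = AlgHom.id K _ := AlgHom.ext hts
    rw [h3] at h2
    exact (Ideal.map_id (Ideal.span (X '' {j : Fin N | j.1 < k}))).le h2
  · intro h
    have := Ideal.mem_map_of_mem s h
    rwa [hst, ← h1] at this

theorem seqA_reg (hst : ∀ p, s (t p) = p) (hts : ∀ p, t (s p) = p) (k : ℕ) (hk : k < N) (p)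
    (h : seqA s k * p ∈ seqJ s k) : p ∈ seqJ s k := by
  rw [seqJ_mem s t hst hts k hk.le, map_mul, seqA, dif_pos hk, hts, mem_ideal_span_X_image] at h
  rw [seqJ_mem s t hst hts k hk.le, mem_ideal_span_X_image]
  intro e he
  obtain ⟨i, hi, hi2⟩ := h (Finsupp.single ⟨k, hk⟩ 1 + e) (by
    rw [mem_support_iff, coeff_X_mul]
    exact mem_support_iff.mp he)
  refine ⟨i, hi, ?_⟩
  have hi' : (i : ℕ) < k := hi
  have : (⟨k, hk⟩ : Fin N) ≠ i := by
    intro h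
    rw [← h] at hi'
    simp at hi'
  rw [Finsupp.add_apply, Finsupp.single_eq_of_ne this.symm, zero_add] at hi2
  exact hi2

theorem span_X_all (p : MvPolynomial (Fin N) K) :
    p ∈ Ideal.span (X '' {j : Fin N | j.1 < N}) ↔ coeff 0 p = 0 := by
  rw [mem_ideal_span_X_image]
  constructor
  · intro h
    by_contra h0
    obtain ⟨i, _, hi⟩ := h 0 (mem_support_iff.mpr h0)
    simp at hi
  · intro h e he
    have : e ≠ 0 := by
      rintro rfl
      exact (mem_support_iff.mp he) h
    obtain ⟨i, hi⟩ := Finsupp.ne_iff.mp this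
    exact ⟨i, i.2, hi⟩

theorem seqJ_max (hst : ∀ p, s (t p) = p) (hts : ∀ p, t (s p) = p)
    (h0 : ∀ i, coeff 0 (s (X i)) = 0) (p) : p ∈ seqJ s N ↔ coeff 0 p = 0 := by
  rw [seqJ_mem s t hst hts N le_rfl, span_X_all]
  have h1 : ∀ q, constantCoeff (s q) = constantCoeff q := by
    intro q
    have : (constantCoeff (R := K)).comp s.toRingHom = (constantCoeff (σ := Fin N)) := by
      apply MvPolynomial.ringHom_ext
      · intro r
        have : s (C r) = C r := s.commutes r
        simp [this]
      · intro i
        simpa [constantCoeff_eq] using h0 i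
    exact DFunLike.congr_fun this q
  have h2 := h1 (t p)
  rw [hst] at h2
  simp only [constantCoeff_eq] at h2
  rw [h2]

end RegSeq

section Dia7
variable (K : Type*) [Field K] (m : ℕ) (b : K)

/-- change of coordinates -/
noncomputable def sg : DS K m →ₐ[K] DS K m :=
  evS K m (th1 K m) (xP K (m + 3)) (fun i => if i = 0 then th2 K m b else yP K (m + 3) i)

/-- inverse change of coordinates -/
noncomputable def tu : DS K m →ₐ[K] DS K m :=
  evS K m (zP K (m + 3)) (zP K (m + 3) - xP K (m + 3))
    (fun i => if i = 0 then yP K (m + 3) 0 + C b * zP K (m + 3) -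
      ∑ j ∈ Finset.univ.erase 0, yP K (m + 3) j else yP K (m + 3) i)

theorem dia_hom_ext (f : DS K m →ₐ[K] DS K m) (hx : f (xP K (m + 3)) = xP K (m + 3))
    (hz : f (zP K (m + 3)) = zP K (m + 3)) (hy : ∀ i, f (yP K (m + 3) i) = yP K (m + 3) i) (p) :
    f p = p := by
  have : f = AlgHom.id K _ := by
    apply MvPolynomial.algHom_ext
    intro i
    rcases dia_var K m i with h | h | ⟨j, h⟩
    · rw [h]; exact hx
    · rw [h]; exact hz
    · rw [h]; exact hy j
  rw [this]; rfl

theorem sg_tu (p) : sg K m b (tu K m b p) = p := by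
  refine dia_hom_ext K m ((sg K m b).comp (tu K m b)) ?_ ?_ ?_ p
  · simp only [AlgHom.comp_apply, tu, evS_x]
    simp only [sg, evS_z]
  · simp only [AlgHom.comp_apply, tu, evS_z, map_sub]
    simp only [sg, evS_z, evS_x, th1]; ring
  · intro i
    simp only [AlgHom.comp_apply, tu, evS_y]
    by_cases hi : i = 0
    · have hC : sg K m b (C b) = C b := (sg K m b).commutes b
      simp only [hi, if_true, map_sub, map_add, map_mul, map_sum, hC]
      simp only [sg, evS_y, evS_z, if_true]
      rw [Finset.sum_congr rfl (g := fun j => yP K (m + 3) j)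
        (fun j hj => if_neg (Finset.ne_of_mem_erase hj)), th2,
        ← Finset.add_sum_erase _ _ (Finset.mem_univ (0 : Fin (m + 3)))]
      ring
    · simp only [hi, if_false]
      simp [sg, evS_y, hi]

theorem tu_sg (p) : tu K m b (sg K m b p) = p := by
  refine dia_hom_ext K m ((tu K m b).comp (sg K m b)) ?_ ?_ ?_ p
  · simp only [AlgHom.comp_apply, sg, evS_x, th1, map_sub]
    simp only [tu, evS_z, evS_x]; ring
  · simp only [AlgHom.comp_apply, sg, evS_z]
    simp only [tu, evS_x]
  · intro i
    simp only [AlgHom.comp_apply, sg, evS_y]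
    by_cases hi : i = 0
    · have hC : tu K m b (C b) = C b := (tu K m b).commutes b
      simp only [hi, if_true, th2]
      rw [← Finset.add_sum_erase _ _ (Finset.mem_univ (0 : Fin (m + 3)))]
      simp only [map_sub, map_add, map_mul, map_sum, hC]
      simp only [tu, evS_y, evS_x, if_true]
      rw [Finset.sum_congr rfl (g := fun j => yP K (m + 3) j)
        (fun j hj => if_neg (Finset.ne_of_mem_erase hj))]
      ring
    · simp only [hi, if_false]
      simp [tu, evS_y, hi]

theorem sg_coeff (i) : coeff 0 (sg K m b (X i)) = 0 := by
  rw [← constantCoeff_eq]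
  have hx : constantCoeff (xP K (m + 3)) = 0 := by simp [xP]
  have hz : constantCoeff (zP K (m + 3)) = 0 := by simp [zP]
  have hy : ∀ i, constantCoeff (yP K (m + 3) i) = 0 := by simp [yP]
  rcases dia_var K m i with h | h | ⟨j, h⟩
  · rw [h, sg, evS_x, th1, map_sub, hx, hz, sub_zero]
  · rw [h, sg, evS_z, hx]
  · rw [h, sg, evS_y]
    split
    · rw [th2, map_sub, map_sum, map_mul, hx]; simp [hy]
    · exact hy j

theorem sgA0 : seqA (sg K m b) 0 = th1 K m := by
  rw [seqA, dif_pos (by omega)]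
  exact evS_x _ _ _

theorem sgA1 : seqA (sg K m b) 1 = th2 K m b := by
  rw [seqA, dif_pos (by omega)]
  refine (evS_y _ _ _ (0 : Fin (m + 3))).trans ?_
  simp

theorem dia_rank (F : MinGradedFreeRes K (Fin (m + 3 + 2)) (diamondIdeal K (m + 3))) :
    Nat.card (F.B (m + 3)) = 1 ∧ ∀ q, m + 3 < q → IsEmpty (F.B q) := by
  obtain ⟨b, α, β, δ, hab, hd⟩ := dia_consts K m
  have hJ1 : seqJ (sg K m b) 1 = Ideal.span {th1 K m} := by
    rw [seqJ_succ, seqJ_zero, bot_sup_eq, sgA0]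
  have hJ2 : diamondIdeal K (m + 3) ⊔ seqJ (sg K m b) 2 = DJ K m b := by
    rw [DJ, seqJ_succ, hJ1, sgA1, Ideal.span_insert]
  have hmax := seqJ_max (sg K m b) (tu K m b) (sg_tu K m b) (tu_sg K m b) (sg_coeff K m b)
  refine F.tor_final (m + 3) (seqA (sg K m b)) (seqJ (sg K m b)) (seqJ_zero _) (seqJ_succ _)
    (fun k hk => seqA_reg _ _ (sg_tu K m b) (tu_sg K m b) k hk) ?_ ?_ hmax (vS K m α β) ?_ ?_ ?_
  · rw [seqJ_zero, sup_bot_eq, sgA0]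
    exact dia_regS1 K m δ hab hd
  · rw [hJ1, sgA1]
    exact dia_regS2 K m δ hab hd
  · rw [hJ2]
    exact dia_vne K m δ hab hd
  · intro l hl
    rw [hJ2]
    have h1 : seqA (sg K m b) (l + 2) ∈ Ideal.span (X '' {j : Fin (m + 3 + 2) | j.1 < m + 3 + 2}) := by
      rw [span_X_all, seqA, dif_pos (by omega)]
      exact sg_coeff K m b _
    have h2 : Ideal.span (X '' {j : Fin (m + 3 + 2) | j.1 < m + 3 + 2}) ≤
        (DJ K m b).colon {vS K m α β} := by
      rw [Ideal.span_le]
      rintro _ ⟨j, -, rfl⟩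
      rw [SetLike.mem_coe, Submodule.mem_colon_singleton]
      exact dia_Xv K m δ hab hd j
    exact Submodule.mem_colon_singleton.mp (h2 h1)
  · intro r hr
    rw [hJ2] at hr ⊢
    refine dia_socle K m δ hab hd r fun i => ?_
    have h1 : (X i : DS K m) ∈ seqJ (sg K m b) (m + 3 + 2) := by
      rw [hmax]; simp
    have h2 : seqJ (sg K m b) (m + 3 + 2) ≤ (DJ K m b).colon {r} := by
      rw [seqJ, Ideal.span_le]
      rintro _ ⟨j, hj, rfl⟩
      have hj' : j < m + 3 + 2 := hj
      rw [SetLike.mem_coe, Submodule.mem_colon_singleton]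
      rcases j with _ | _ | j
      · rw [sgA0]
        exact Ideal.mul_mem_right _ _ ((le_sup_right : _ ≤ DJ K m b) (Ideal.subset_span (by simp)))
      · rw [zero_add, sgA1]
        exact Ideal.mul_mem_right _ _ ((le_sup_right : _ ≤ DJ K m b) (Ideal.subset_span (by simp)))
      · exact hr j (by omega)
    exact Submodule.mem_colon_singleton.mp (h2 h1)

end Dia7


section Exist
variable {K : Type*} [Field K] {σ : Type*} {B : Type*}

/-- homogeneous vectors -/
def HomV (deg : B → ℕ) (e : ℕ) (u : B →₀ MvPolynomial σ K) : Prop :=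
  ∀ c, ∀ m ∈ (u c).support, mdeg m + deg c = e

/-- homogeneous components of vectors -/
noncomputable def vcmp (deg : B → ℕ) (e : ℕ) (u : B →₀ MvPolynomial σ K) : B →₀ MvPolynomial σ K :=
  Finsupp.onFinset u.support
    (fun c => if deg c ≤ e then homogeneousComponent (e - deg c) (u c) else 0) (by
      intro c hc
      rw [Finsupp.mem_support_iff]
      intro h
      rw [h] at hc
      simp at hc)

theorem mdeg_eq (m : σ →₀ ℕ) : mdeg m = m.degree := rfl

theorem mdeg_add (m m' : σ →₀ ℕ) : mdeg (m + m') = mdeg m + mdeg m' := by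
  simp only [mdeg_eq]; exact map_add _ _ _

theorem vcmp_apply (deg : B → ℕ) (e : ℕ) (u : B →₀ MvPolynomial σ K) (c : B) :
    vcmp deg e u c = if deg c ≤ e then homogeneousComponent (e - deg c) (u c) else 0 := rfl

theorem vcmp_coeff (deg : B → ℕ) (e : ℕ) (u : B →₀ MvPolynomial σ K) (c : B) (m : σ →₀ ℕ) :
    coeff m (vcmp deg e u c) = if mdeg m + deg c = e then coeff m (u c) else 0 := by
  rw [vcmp_apply]
  by_cases h : deg c ≤ e
  · rw [if_pos h, coeff_homogeneousComponent, ← mdeg_eq]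
    by_cases h2 : mdeg m = e - deg c
    · rw [if_pos h2, if_pos (by omega)]
    · rw [if_neg h2, if_neg (by omega)]
  · rw [if_neg h, if_neg (by omega), coeff_zero]

theorem vcmp_add (deg : B → ℕ) (e : ℕ) (u v : B →₀ MvPolynomial σ K) :
    vcmp deg e (u + v) = vcmp deg e u + vcmp deg e v := by
  ext c m
  rw [Finsupp.add_apply, coeff_add, vcmp_coeff, vcmp_coeff, vcmp_coeff, Finsupp.add_apply, coeff_add]
  split <;> simp

theorem vcmp_zero (deg : B → ℕ) (e : ℕ) :
    vcmp deg e (0 : B →₀ MvPolynomial σ K) = 0 := by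
  ext c m
  rw [vcmp_coeff]; simp

theorem vcmp_hom (deg : B → ℕ) (e : ℕ) (u : B →₀ MvPolynomial σ K) : HomV deg e (vcmp deg e u) := by
  intro c m hm
  rw [mem_support_iff, vcmp_coeff] at hm
  by_contra h
  rw [if_neg h] at hm
  exact hm rfl

theorem vcmp_of_hom (deg : B → ℕ) (e f : ℕ) (u : B →₀ MvPolynomial σ K) (h : HomV deg f u) :
    vcmp deg e u = if e = f then u else 0 := by
  ext c m
  rw [vcmp_coeff]
  by_cases h0 : coeff m (u c) = 0
  · rw [h0]
    by_cases hef : e = f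
    · rw [if_pos hef, h0]; simp
    · rw [if_neg hef]; simp
  · have h1 := h c m (mem_support_iff.mpr h0)
    by_cases hef : e = f
    · rw [if_pos hef, if_pos (by omega)]
    · rw [if_neg hef, if_neg (by omega)]; simp

theorem vcmp_sum (deg : B → ℕ) (u : B →₀ MvPolynomial σ K) :
    ∃ M, u = ∑ e ∈ Finset.range M, vcmp deg e u := by
  classical
  refine ⟨(u.support.sup fun c => (u c).support.sup fun m => mdeg m + deg c) + 1, ?_⟩
  ext c m
  rw [Finsupp.finsetSum_apply, coeff_sum]
  simp_rw [vcmp_coeff]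
  by_cases h0 : coeff m (u c) = 0
  · simp [h0]
  · have hc : c ∈ u.support := by
      rw [Finsupp.mem_support_iff]
      intro h
      rw [h] at h0
      simp at h0
    rw [Finset.sum_ite_eq, if_pos]
    rw [Finset.mem_range, Nat.lt_succ_iff]
    refine le_trans ?_ (Finset.le_sup (f := fun c => (u c).support.sup fun m => mdeg m + deg c) hc)
    exact Finset.le_sup (f := fun m => mdeg m + deg c) (mem_support_iff.mpr h0)

theorem HomV_monomial_smul (deg : B → ℕ) (e : ℕ) (u : B →₀ MvPolynomial σ K) (h : HomV deg e u)
    (m : σ →₀ ℕ) (a : K) : HomV deg (mdeg m + e) ((monomial m a : MvPolynomial σ K) • u) := by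
  classical
  intro c m' hm'
  rw [Finsupp.smul_apply, smul_eq_mul, mem_support_iff, coeff_monomial_mul'] at hm'
  split at hm'
  · rename_i hle
    have h1 := h c (m' - m) (mem_support_iff.mpr (right_ne_zero_of_mul hm'))
    have h2 : mdeg m' = mdeg m + mdeg (m' - m) := by
      rw [← mdeg_add, add_tsub_cancel_of_le hle]
    omega
  · exact absurd rfl hm'

theorem HomV_single (deg : B → ℕ) (b : B) :
    HomV deg (deg b) (Finsupp.single b (1 : MvPolynomial σ K)) := by
  classical
  intro c m hm
  rw [mem_support_iff] at hm
  by_cases h : b = c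
  · subst h
    rw [Finsupp.single_eq_same, coeff_one] at hm
    have : m = 0 := by
      by_contra h
      rw [if_neg (fun h' => h h'.symm)] at hm
      exact hm rfl
    subst this
    simp [mdeg]
  · rw [Finsupp.single_eq_of_ne (fun h' => h h'.symm)] at hm
    simp at hm

theorem vcmp_comm {B' : Type*} (deg : B → ℕ) (deg' : B' → ℕ)
    (d : (B' →₀ MvPolynomial σ K) →ₗ[MvPolynomial σ K] (B →₀ MvPolynomial σ K))
    (hd : ∀ b, HomV deg (deg' b) (d (Finsupp.single b 1))) (e : ℕ) (u) :
    d (vcmp deg' e u) = vcmp deg e (d u) := by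
  induction u using Finsupp.induction_linear with
  | zero => rw [vcmp_zero, map_zero, vcmp_zero]
  | add u v hu hv => rw [vcmp_add, map_add, map_add, vcmp_add, hu, hv]
  | single b p =>
    induction p using MvPolynomial.induction_on' with
    | add p q hp hq => rw [Finsupp.single_add, vcmp_add, map_add, map_add, vcmp_add, hp, hq]
    | monomial m a =>
      have h1 : Finsupp.single b (monomial m a : MvPolynomial σ K) =
          (monomial m a : MvPolynomial σ K) • Finsupp.single b 1 := by
        rw [Finsupp.smul_single, smul_eq_mul, mul_one]
      rw [h1, vcmp_of_hom deg' e _ _ (HomV_monomial_smul deg' _ _ (HomV_single deg' b) m a), map_smul,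
        vcmp_of_hom deg e _ _ (HomV_monomial_smul deg _ _ (hd b) m a)]
      split
      · rw [map_smul]
      · rw [map_zero]

end Exist


section Exist2
variable {K : Type*} [Field K] {σ : Type*}

theorem step_gen [Finite σ] {k : ℕ} (deg : Fin k → ℕ)
    (N : Submodule (MvPolynomial σ K) (Fin k →₀ MvPolynomial σ K))
    (hN : ∀ u ∈ N, ∀ e, vcmp deg e u ∈ N) :
    ∃ r : ℕ, ∃ (g : Fin r → (Fin k →₀ MvPolynomial σ K)) (dg : Fin r → ℕ),
      (∀ i, HomV deg (dg i) (g i)) ∧ Submodule.span (MvPolynomial σ K) (Set.range g) = N := by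
  classical
  have hfg : N.FG := IsNoetherian.noetherian N
  obtain ⟨T, hT⟩ := hfg
  choose M hM using fun u : Fin k →₀ MvPolynomial σ K => vcmp_sum deg u
  let ι := Σ t : T, Fin (M t.1)
  have e : ι ≃ Fin (Fintype.card ι) := Fintype.equivFin ι
  refine ⟨Fintype.card ι, fun i => vcmp deg ((e.symm i).2 : ℕ) (e.symm i).1.1,
    fun i => ((e.symm i).2 : ℕ), fun i => vcmp_hom _ _ _, ?_⟩
  apply le_antisymm
  · rw [Submodule.span_le]
    rintro _ ⟨i, rfl⟩
    refine hN _ ?_ _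
    rw [← hT]
    exact Submodule.subset_span (e.symm i).1.2
  · rw [← hT, Submodule.span_le]
    intro t ht
    rw [SetLike.mem_coe, hM t]
    refine Submodule.sum_mem _ fun j hj => ?_
    refine Submodule.subset_span ⟨e ⟨⟨t, ht⟩, ⟨j, Finset.mem_range.mp hj⟩⟩, ?_⟩
    beta_reduce
    rw [Equiv.symm_apply_apply]

theorem step_lemma [Finite σ] {k : ℕ} (deg : Fin k → ℕ)
    (N : Submodule (MvPolynomial σ K) (Fin k →₀ MvPolynomial σ K))
    (hN : ∀ u ∈ N, ∀ e, vcmp deg e u ∈ N) :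
    ∃ (r : ℕ) (dg : Fin r → ℕ)
      (d : (Fin r →₀ MvPolynomial σ K) →ₗ[MvPolynomial σ K] (Fin k →₀ MvPolynomial σ K)),
      (∀ b, HomV deg (dg b) (d (Finsupp.single b 1))) ∧ LinearMap.range d = N ∧
      ∀ u, d u = 0 → ∀ c, coeff 0 (u c) = 0 := by
  classical
  have hex := step_gen deg N hN
  obtain ⟨g, dg, hg, hspan⟩ := Nat.find_spec hex
  have hmin : ∀ r < Nat.find hex, _ := fun r hr => Nat.find_min hex hr
  revert g dg hmin
  generalize Nat.find hex = r
  intro g dg hg hspan hmin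
  have hds : ∀ b, Finsupp.linearCombination (MvPolynomial σ K) g (Finsupp.single b 1) = g b := by
    intro b
    rw [Finsupp.linearCombination_single, one_smul]
  have hdh : ∀ b, HomV deg (dg b) (Finsupp.linearCombination (MvPolynomial σ K) g
      (Finsupp.single b 1)) := fun b => by rw [hds]; exact hg b
  refine ⟨r, dg, Finsupp.linearCombination _ g, hdh, ?_, ?_⟩
  · rw [Finsupp.range_linearCombination, hspan]
  · intro u hu c
    by_contra h0
    obtain ⟨r, rfl⟩ : ∃ r', r = r' + 1 := ⟨r - 1, by have := c.pos; omega⟩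
    refine hmin r (by omega) ⟨fun i => g (c.succAbove i), fun i => dg (c.succAbove i),
      fun i => hg _, ?_⟩
    have h1 := vcmp_comm deg dg _ hdh (dg c) u
    rw [hu, vcmp_zero, Finsupp.linearCombination_apply, Finsupp.sum_fintype _ _ (by simp),
      Fin.sum_univ_succAbove _ c, vcmp_apply, if_pos le_rfl, Nat.sub_self,
      homogeneousComponent_zero] at h1
    have hgc : g c ∈ Submodule.span (MvPolynomial σ K) (Set.range fun i => g (c.succAbove i)) := by
      have h2 : g c = (C (coeff 0 (u c))⁻¹ : MvPolynomial σ K) • ((C (coeff 0 (u c)) : MvPolynomial σ K) • g c) := by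
        rw [smul_smul, ← C_mul, inv_mul_cancel₀ h0, C_1, one_smul]
      rw [h2, eq_neg_of_add_eq_zero_left h1]
      refine Submodule.smul_mem _ _ (Submodule.neg_mem _ (Submodule.sum_mem _ fun i _ => ?_))
      exact Submodule.smul_mem _ _ (Submodule.subset_span ⟨i, rfl⟩)
    rw [← hspan]
    apply le_antisymm
    · apply Submodule.span_mono
      rintro _ ⟨i, rfl⟩
      exact ⟨_, rfl⟩
    · rw [Submodule.span_le]
      rintro _ ⟨i, rfl⟩
      rcases Fin.eq_self_or_eq_succAbove c i with rfl | ⟨j, rfl⟩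
      · exact hgc
      · exact Submodule.subset_span ⟨j, rfl⟩

variable (K σ) in
/-- State of the recursive construction of the resolution. -/
structure ResState where
  k : ℕ
  deg : Fin k → ℕ
  N : Submodule (MvPolynomial σ K) (Fin k →₀ MvPolynomial σ K)
  homN : ∀ u ∈ N, ∀ e, vcmp deg e u ∈ N
  minN : ∀ u ∈ N, ∀ c, coeff 0 (u c) = 0

theorem res_next [Finite σ] (s : ResState K σ) : ∃ (t : ResState K σ)
    (d : (Fin t.k →₀ MvPolynomial σ K) →ₗ[MvPolynomial σ K] (Fin s.k →₀ MvPolynomial σ K)),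
    LinearMap.range d = s.N ∧ t.N = LinearMap.ker d ∧
    ∀ b, HomV s.deg (t.deg b) (d (Finsupp.single b 1)) := by
  obtain ⟨r, dg, d, h1, h2, h3⟩ := step_lemma s.deg s.N s.homN
  refine ⟨⟨r, dg, LinearMap.ker d, ?_, fun u hu => h3 u hu⟩, d, h2, rfl, h1⟩
  intro u hu e
  rw [LinearMap.mem_ker] at hu ⊢
  rw [vcmp_comm s.deg dg d h1, hu, vcmp_zero]

theorem res_exists [Finite σ] (I : Ideal (MvPolynomial σ K))
    (hI : ∀ p ∈ I, ∀ e, homogeneousComponent e p ∈ I) (hI0 : ∀ p ∈ I, coeff 0 p = 0) :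
    Nonempty (MinGradedFreeRes K σ I) := by
  choose next d hd1 hd2 hd3 using res_next (K := K) (σ := σ)
  let ε : (Fin 1 →₀ MvPolynomial σ K) →ₗ[MvPolynomial σ K] MvPolynomial σ K := Finsupp.lapply 0
  let s0 : ResState K σ :=
    { k := 1
      deg := fun _ => 0
      N := Submodule.comap ε (I : Submodule _ _)
      homN := by
        intro u hu e
        rw [Submodule.mem_comap] at hu ⊢
        have : ε (vcmp (fun _ => 0) e u) = homogeneousComponent e (ε u) := by
          simp [ε, Finsupp.lapply_apply, vcmp_apply]
        rw [this]
        exact hI _ hu e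
      minN := by
        intro u hu c
        rw [Subsingleton.elim c 0]
        exact hI0 _ hu }
  let st : ℕ → ResState K σ := fun i => Nat.rec s0 (fun _ s => next s) i
  refine ⟨{ B := fun i => Fin (st i).k
            finB := fun i => inferInstance
            deg := fun i => (st i).deg
            d := fun i => d (st i)
            ε := ε
            ε_homog := ?_
            surj := ?_
            exact0 := hd1 s0
            exact := ?_
            homog := ?_
            minimal := ?_ }⟩
  · intro b
    have : ε (Finsupp.single b 1) = 1 := by
      rw [Subsingleton.elim (α := Fin 1) b 0]
      exact Finsupp.single_eq_same
    rw [this]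
    exact isHomogeneous_one σ K
  · intro s
    refine ⟨Finsupp.single 0 s, ?_⟩
    have : ε (Finsupp.single 0 s) = s := Finsupp.single_eq_same
    rw [this, sub_self]
    exact I.zero_mem
  · intro i
    exact (hd1 (next (st i))).trans (hd2 (st i))
  · intro i b c
    exact hd3 (st i) b c
  · intro i b c
    refine (st i).minN _ ?_ c
    rw [← hd1 (st i)]
    exact LinearMap.mem_range_self _ _

end Exist2

section ExistDia
attribute [local instance] MvPolynomial.gradedAlgebra

theorem dia_res (K : Type*) [Field K] (n : ℕ) :
    Nonempty (MinGradedFreeRes K (Fin (n + 2)) (diamondIdeal K n)) := by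
  have hhom : ∀ i j : Fin n, (yP K n i * yP K n j - xP K n * zP K n).IsHomogeneous 2 := by
    intro i j
    exact ((isHomogeneous_X K _).mul (isHomogeneous_X K _)).sub
      ((isHomogeneous_X K _).mul (isHomogeneous_X K _))
  apply res_exists
  · have h : (diamondIdeal K n).IsHomogeneous (homogeneousSubmodule (Fin (n + 2)) K) := by
      apply Ideal.homogeneous_span
      rintro _ ⟨i, j, -, rfl⟩
      exact ⟨2, hhom i j⟩
    intro p hp e
    exact homogeneousComponent_mem_of_mem h hp e
  · intro p hp
    have : diamondIdeal K n ≤ RingHom.ker (constantCoeff (R := K) (σ := Fin (n + 2))) := by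
      rw [diamondIdeal, Ideal.span_le]
      rintro _ ⟨i, j, -, rfl⟩
      simp [xP, yP, zP, RingHom.mem_ker]
    exact this hp

end ExistDia

/-- The diamond ideal is Gorenstein: `S/I` is Cohen–Macaulay and the last nonzero free
module in its minimal graded free resolution has rank `1`. -/
theorem diamond_is_Gorenstein (K : Type*) [Field K] (n : ℕ) (hn : 3 ≤ n) :
    IsCMquot (diamondIdeal K n) ∧
      Nonempty (MinGradedFreeRes K (Fin (n + 2)) (diamondIdeal K n)) ∧
      ∀ F : MinGradedFreeRes K (Fin (n + 2)) (diamondIdeal K n),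
        ∃ p : ℕ, Nat.card (F.B p) = 1 ∧ ∀ q, p < q → IsEmpty (F.B q) := by
  obtain ⟨m, rfl⟩ : ∃ m, n = m + 3 := ⟨n - 3, by omega⟩
  exact ⟨dia_CM K m, dia_res K (m + 3), fun F => ⟨m + 3, dia_rank K m F⟩⟩
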